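/- arXiv:1102.1346 — 2 statements merged into one kernel-verified Lean document; each statement's English description precedes it below -/
import Mathlib

section
/- Let (a_n) be a non-degenerate recurrent sequence with values in a number field K that is not identically zero. Then a_n = 0 for only finitely many n. -/
open Polynomial

namespace SML

open NormedSpace Filter Topology

lemma radius_pos (p : ℕ) [hp : Fact p.Prime] (E : Type*) [NormedField E] [NormedAlgebra ℚ_[p] E] :
    0 < (expSeries ℚ_[p] E).radius := by
  have hp0 : (0 : ℝ) < p := by exact_mod_cast hp.out.pos
  let r : NNReal := ⟨(p : ℝ)⁻¹, by positivity⟩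
  have hr : 0 < r := by
    change (0 : ℝ) < (p : ℝ)⁻¹
    positivity
  refine lt_of_lt_of_le (ENNReal.coe_pos.2 hr) ?_
  refine FormalMultilinearSeries.le_radius_of_bound _ 1 fun n => ?_
  have hv : padicValNat p n.factorial ≤ n := by
    have h := sub_one_mul_padicValNat_factorial (p := p) n
    have h2 : 1 ≤ p - 1 := by have := hp.out.two_le; omega
    calc _ = 1 * padicValNat p n.factorial := (one_mul _).symm
      _ ≤ (p - 1) * padicValNat p n.factorial := Nat.mul_le_mul_right _ h2
      _ ≤ n := by rw [h]; omega
  have hfac : ‖((n.factorial : ℚ_[p])⁻¹)‖ ≤ (p : ℝ) ^ n := by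
    have hne : (n.factorial : ℚ_[p]) ≠ 0 := by exact_mod_cast n.factorial_ne_zero
    rw [norm_inv, Padic.norm_eq_zpow_neg_valuation hne, Padic.valuation_natCast, zpow_neg, inv_inv,
      zpow_natCast]
    exact pow_le_pow_right₀ (by exact_mod_cast hp.out.one_le) hv
  have hb : ‖expSeries ℚ_[p] E n‖ ≤ (p : ℝ) ^ n := by
    unfold expSeries
    rw [norm_smul, ContinuousMultilinearMap.norm_mkPiAlgebraFin, mul_one]
    exact hfac
  have hrr : (r : ℝ) = (p : ℝ)⁻¹ := rfl
  calc _ ≤ (p : ℝ) ^ n * (r : ℝ) ^ n := by gcongr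
    _ = 1 := by rw [hrr, ← mul_pow, mul_inv_cancel₀ hp0.ne', one_pow]

lemma exists_log (p : ℕ) [hp : Fact p.Prime] (E : Type*) [NormedField E] [NormedAlgebra ℚ_[p] E]
    [CompleteSpace E] : ∃ ε : ℝ, 0 < ε ∧ ∀ x : E, ‖x - 1‖ < ε →
      ∃ l : E, l ∈ Metric.eball (0 : E) (expSeries ℚ_[p] E).radius ∧ exp l = x := by
  have h := hasStrictFDerivAt_exp_zero_of_radius_pos (radius_pos p E)
  have h2 := h.map_nhds_eq_of_surj (by
    rw [LinearMap.range_eq_top]; intro x; exact ⟨x, rfl⟩)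
  have h3 : exp '' (Metric.eball (0 : E) (expSeries ℚ_[p] E).radius) ∈ 𝓝 (1 : E) := by
    rw [exp_zero] at h2
    rw [← h2]
    exact image_mem_map (Metric.eball_mem_nhds _ (radius_pos p E))
  obtain ⟨ε, h0, hε⟩ := Metric.mem_nhds_iff.1 h3
  refine ⟨ε, h0, fun x hx => ?_⟩
  obtain ⟨l, hl, e⟩ := hε (show x ∈ Metric.ball 1 ε by rwa [mem_ball_iff_norm])
  exact ⟨l, hl, e⟩

lemma mem_genEig {F : Type*} [Field F] [CharZero F] (S : Module.End F (ℕ → F))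
    (hS : ∀ f n, S f n = f (n + 1)) (γ : F) (k : ℕ) : ∀ (B : F[X]), B.degree < k →
    (fun n : ℕ => B.eval (n : F) * γ ^ n) ∈ S.genEigenspace γ k := by
  induction k with
  | zero =>
    intro B hB
    have : B = 0 := by
      rw [← degree_eq_bot]
      exact Nat.WithBot.lt_zero_iff.1 (by exact_mod_cast hB)
    subst this
    simp only [eval_zero, zero_mul]
    exact Submodule.zero_mem _
  | succ k ih =>
    intro B hB
    rw [Module.End.mem_genEigenspace_nat, LinearMap.mem_ker, pow_succ, Module.End.mul_apply]
    have hC : (C γ * (B.comp (X + 1) - B)).degree < k := by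
      by_cases hB0 : B = 0
      · subst hB0; simp
      have hd : (B.comp (X + 1) - B).degree < B.degree := by
        have hdd : (B.comp (X + 1)).natDegree = B.natDegree := by
          rw [natDegree_comp]
          have : (X + 1 : F[X]).natDegree = 1 := natDegree_X_add_C 1
          rw [this, mul_one]
        have hl : (B.comp (X + 1)).leadingCoeff = B.leadingCoeff := by
          have h1 : (X + 1 : F[X]).natDegree = 1 := natDegree_X_add_C 1
          have h2 : (X + 1 : F[X]).leadingCoeff = 1 := leadingCoeff_X_add_C 1
          rw [leadingCoeff_comp (by rw [h1]; simp), h2]; simp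
        have h0 : B.comp (X + 1) ≠ 0 := by
          rw [← leadingCoeff_ne_zero, hl]; exact leadingCoeff_ne_zero.2 hB0
        have hdeg : (B.comp (X + 1)).degree = B.degree := by
          rw [degree_eq_natDegree h0, degree_eq_natDegree hB0, hdd]
        rw [← hdeg]
        exact degree_sub_lt_left hdeg h0 hl
      have hk : B.degree ≤ k := by
        rw [degree_eq_natDegree hB0] at hB ⊢
        have : B.natDegree < k + 1 := by exact_mod_cast hB
        exact_mod_cast Nat.lt_succ_iff.1 this
      refine lt_of_le_of_lt ?_ (lt_of_lt_of_le hd hk)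
      rw [← smul_eq_C_mul]
      exact degree_smul_le _ _
    have := ih _ hC
    rw [Module.End.mem_genEigenspace_nat, LinearMap.mem_ker] at this
    convert this using 2
    funext n
    simp [hS, pow_succ]
    ring

lemma expPoly_indep {F : Type*} [Field F] [CharZero F] {ι : Type*} [Fintype ι] (γ : ι → F)
    (hγ : Function.Injective γ) (h0 : ∀ i, γ i ≠ 0) (B : ι → F[X])
    (h : ∀ n : ℕ, ∑ i, (B i).eval (n : F) * γ i ^ n = 0) : ∀ i, B i = 0 := by
  classical
  let S : Module.End F (ℕ → F) :=
    { toFun := fun f n => f (n + 1), map_add' := fun _ _ => rfl, map_smul' := fun _ _ => rfl }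
  have hind := (S.independent_maxGenEigenspace).comp hγ
  have hz : ∀ i, (fun n : ℕ => (B i).eval (n : F) * γ i ^ n) = 0 := by
    have := (iSupIndep_iff_forall_dfinsupp _).1 hind
    have key := iSupIndep.dfinsupp_lsum_injective hind
    let v : ∀ i, S.maxGenEigenspace (γ i) := fun i =>
      ⟨fun n : ℕ => (B i).eval (n : F) * γ i ^ n, by
        have := mem_genEig S (fun _ _ => rfl) (γ i) ((B i).natDegree + 1) (B i)
          (lt_of_le_of_lt degree_le_natDegree (by exact_mod_cast Nat.lt_succ_self _))
        exact (S.genEigenspace (γ i)).mono le_top this⟩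
    let w := DFinsupp.equivFunOnFintype.symm v
    have hw : w = 0 := by
      apply key
      rw [map_zero, DFinsupp.lsum_apply_apply, DFinsupp.sumAddHom_apply, DFinsupp.sum_eq_sum_fintype]
      · funext n
        have := h n
        rw [Finset.sum_apply]
        exact this
      · simp
    intro i
    have : w i = 0 := by rw [hw]; rfl
    exact congrArg Subtype.val this
  intro i
  apply Polynomial.funext
  have : (B i) = 0 := by
    apply Polynomial.eq_zero_of_infinite_isRoot
    refine Set.Infinite.mono ?_ (Set.infinite_range_of_injective (Nat.cast_injective (R := F)))
    rintro _ ⟨n, rfl⟩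
    have := congrFun (hz i) n
    simpa [h0 i] using this
  simp [this]

lemma exists_pow_near (p : ℕ) [hp : Fact p.Prime] {m : ℕ} (x : Fin m → PadicAlgCl p)
    (hx : ∀ i, ‖x i‖ = 1) (ε : ℝ) (hε : 0 < ε) : ∃ N : ℕ, 0 < N ∧ ∀ i, ‖x i ^ N - 1‖ < ε := by
  let F := IntermediateField.adjoin ℚ_[p] (Set.range x)
  have hfd : FiniteDimensional ℚ_[p] F := by
    apply IntermediateField.finiteDimensional_adjoin
    intro y _
    exact (Algebra.IsAlgebraic.isAlgebraic y).isIntegral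
  let V : Submodule ℚ_[p] (PadicAlgCl p) := Subalgebra.toSubmodule F.toSubalgebra
  have hV : FiniteDimensional ℚ_[p] V := hfd
  have : ProperSpace V := FiniteDimensional.proper ℚ_[p] V
  let s : ℕ → Fin m → V := fun n i => ⟨x i ^ n, by
    change x i ^ n ∈ F
    exact pow_mem (IntermediateField.subset_adjoin _ _ (Set.mem_range_self i)) n⟩
  have hs : ∀ n, s n ∈ Metric.closedBall (0 : Fin m → V) 1 := by
    intro n
    rw [mem_closedBall_zero_iff, pi_norm_le_iff_of_nonneg zero_le_one]
    intro i
    change ‖x i ^ n‖ ≤ 1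
    rw [norm_pow, hx, one_pow]
  obtain ⟨L, -, φ, hφ, hL⟩ := (isCompact_closedBall (0 : Fin m → V) 1).tendsto_subseq hs
  obtain ⟨k, hk⟩ := Metric.cauchySeq_iff'.1 hL.cauchySeq ε hε
  have h1 := hk (k + 1) (by omega)
  have hlt : φ k < φ (k + 1) := hφ (by omega)
  refine ⟨φ (k + 1) - φ k, by omega, fun i => ?_⟩
  have h2 : ‖x i ^ φ (k + 1) - x i ^ φ k‖ < ε := by
    have := (dist_le_pi_dist _ _ i).trans_lt h1
    rw [dist_eq_norm] at this
    exact this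
  have h3 : x i ^ φ (k + 1) - x i ^ φ k = x i ^ φ k * (x i ^ (φ (k + 1) - φ k) - 1) := by
    rw [mul_sub, ← pow_add, mul_one]
    congr 2
    omega
  rwa [h3, norm_mul, norm_pow, hx, one_pow, one_mul] at h2

lemma norm_sum_lt' {E : Type*} [NormedField E] [IsUltrametricDist E] {C : ℝ} (s : Finset ℕ)
    (f : ℕ → E) (hC : 0 < C) (h : ∀ i ∈ s, ‖f i‖ < C) : ‖∑ i ∈ s, f i‖ < C := by
  induction s using Finset.induction_on with
  | empty => simpa using hC
  | insert a s ha ih =>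
    rw [Finset.sum_insert ha]
    refine (IsUltrametricDist.norm_add_le_max _ _).trans_lt (max_lt (h a (by simp)) ?_)
    exact ih fun i hi => h i (by simp [hi])

lemma norm_le_one_of_integral (p : ℕ) [hp : Fact p.Prime] (x : PadicAlgCl p)
    (hx : IsIntegral ℤ x) : ‖x‖ ≤ 1 := by
  obtain ⟨f, hf, h⟩ := hx
  by_contra! hlt
  rw [eval₂_eq_sum_range, Finset.sum_range_succ, hf.coeff_natDegree, map_one, one_mul] at h
  have h2 : x ^ f.natDegree = - ∑ i ∈ Finset.range f.natDegree, algebraMap ℤ (PadicAlgCl p) (f.coeff i) * x ^ i := by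
    rw [eq_neg_iff_add_eq_zero, add_comm]; exact h
  have h3 := congrArg norm h2
  rw [norm_neg, norm_pow] at h3
  have h4 : ‖∑ i ∈ Finset.range f.natDegree, algebraMap ℤ (PadicAlgCl p) (f.coeff i) * x ^ i‖ < ‖x‖ ^ f.natDegree := by
    refine norm_sum_lt' _ _ (pow_pos (by linarith) _) ?_
    intro i hi
    have hi := Finset.mem_range.1 hi
    have hc : ‖algebraMap ℤ (PadicAlgCl p) (f.coeff i)‖ ≤ 1 := by
      rw [eq_intCast, ← map_intCast (algebraMap ℚ_[p] (PadicAlgCl p)), norm_algebraMap']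
      exact Padic.norm_int_le_one _
    rw [norm_mul, norm_pow]
    calc _ ≤ 1 * ‖x‖ ^ i := by gcongr
      _ < _ := by rw [one_mul]; exact pow_lt_pow_right₀ hlt hi
  linarith

lemma exists_bad (K : Type*) [Field K] [CharZero K] [Algebra.IsAlgebraic ℚ K] (x : K) :
    ∃ d : ℤ, d ≠ 0 ∧ IsIntegral ℤ (d • x) := by
  have : IsAlgebraic ℤ x := (IsFractionRing.isAlgebraic_iff ℤ ℚ K).2 (Algebra.IsAlgebraic.isAlgebraic x)
  exact this.exists_integral_multiple

lemma exists_prime (K : Type*) [Field K] [CharZero K] [Algebra.IsAlgebraic ℚ K] {m : ℕ} (x : Fin m → K)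
    (hx : ∀ i, x i ≠ 0) : ∃ (p : ℕ) (_ : Fact p.Prime), ∀ (φ : K →+* PadicAlgCl p), 
      ∀ i, ‖φ (x i)‖ = 1 := by
  choose d hd hdi using fun i => exists_bad K (x i)
  choose e he hei using fun i => exists_bad K (x i)⁻¹
  let D : ℤ := ∏ i, d i * e i
  have hD : D ≠ 0 := Finset.prod_ne_zero_iff.2 fun i _ => mul_ne_zero (hd i) (he i)
  obtain ⟨p, hpD, hp⟩ := Nat.exists_infinite_primes (D.natAbs + 1)
  have : Fact p.Prime := ⟨hp⟩
  refine ⟨p, ⟨hp⟩, fun φ => ?_⟩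
  have hnD : ¬ (p : ℤ) ∣ D := by
    intro h
    have := Nat.le_of_dvd (Int.natAbs_pos.2 hD) (Int.natCast_dvd.1 h)
    omega
  have key : ∀ (y : K) (c : ℤ), c ∣ D → IsIntegral ℤ (c • y) → ‖φ y‖ ≤ 1 := by
    intro y c hc hy
    have h1 : IsIntegral ℤ (φ (c • y)) := hy.map φ.toIntAlgHom
    have h2 := norm_le_one_of_integral p _ h1
    have h3 : ‖(c : PadicAlgCl p)‖ = 1 := by
      rw [← map_intCast (algebraMap ℚ_[p] (PadicAlgCl p)), norm_algebraMap']
      refine le_antisymm (Padic.norm_int_le_one _) (not_lt.1 fun h => hnD ?_)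
      exact ((Padic.norm_intCast_lt_one_iff).1 h).trans hc
    rwa [zsmul_eq_mul, map_mul, map_intCast, norm_mul, h3, one_mul] at h2
  intro i
  have hdvd : d i * e i ∣ D := Finset.dvd_prod_of_mem _ (Finset.mem_univ i)
  have a1 := key _ _ ((dvd_mul_right _ _).trans hdvd) (hdi i)
  have a2 := key _ _ ((dvd_mul_left _ _).trans hdvd) (hei i)
  rw [map_inv₀, norm_inv] at a2
  have a3 : 0 < ‖φ (x i)‖ := norm_pos_iff.2 ((map_ne_zero φ).2 (hx i))
  exact le_antisymm a1 ((inv_le_one₀ a3).1 a2)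

lemma main_padic (p : ℕ) [hp : Fact p.Prime] (E : Type*) [NormedField E] [CharZero E]
    [NormedAlgebra ℚ_[p] E]
    [CompleteSpace E] {m : ℕ} (hm : 0 < m) (α : Fin m → E) (A : Fin m → E[X])
    (h0 : ∀ i, α i ≠ 0) (hA : ∀ i, A i ≠ 0)
    (hinj : ∀ k : ℕ, 0 < k → Function.Injective fun i => α i ^ k)
    (N : ℕ) (hN : 0 < N) (l : Fin m → E)
    (hl : ∀ i, l i ∈ Metric.eball (0 : E) (expSeries ℚ_[p] E).radius)
    (hexp : ∀ i, exp (l i) = α i ^ N) :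
    {n : ℕ | ∑ i, (A i).eval (n : E) * α i ^ n = 0}.Finite := by
  classical
  have hball : ∀ i, ∀ z : ℚ_[p], ‖z‖ ≤ 1 →
      z • l i ∈ Metric.eball (0 : E) (expSeries ℚ_[p] E).radius := by
    intro i z hz
    refine lt_of_le_of_lt ?_ (Metric.mem_eball.1 (hl i))
    rw [edist_zero_right, edist_zero_right, enorm_le_iff_norm_le, norm_smul]
    exact mul_le_of_le_one_left (norm_nonneg _) hz
  have hadd : ∀ i, ∀ z w : ℚ_[p], ‖z‖ ≤ 1 → ‖w‖ ≤ 1 →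
      exp ((z + w) • l i) = exp (z • l i) * exp (w • l i) := by
    intro i z w hz hw
    rw [add_smul]
    exact exp_add_of_mem_ball (hball i z hz) (hball i w hw)
  have hnat : ∀ n : ℕ, ‖(n : ℚ_[p])‖ ≤ 1 := fun n => by
    exact_mod_cast Padic.norm_int_le_one (p := p) (n : ℤ)
  have hexpn : ∀ i, ∀ n : ℕ, exp ((n : ℚ_[p]) • l i) = α i ^ (N * n) := by
    intro i n
    induction n with
    | zero => simp
    | succ n ih =>
      rw [Nat.cast_succ, hadd i _ _ (hnat n) (by simp), ih, one_smul, hexp, ← pow_add]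
      rfl
  have hexpne : ∀ i, ∀ z : ℚ_[p], ‖z‖ ≤ 1 → exp (z • l i) ≠ 0 := by
    intro i z hz
    exact (isUnit_exp_of_mem_ball (hball i z hz)).ne_zero
  by_contra hinf
  obtain ⟨r, hr⟩ : ∃ r : ℕ,
      {n : ℕ | ∑ i, (A i).eval ((r + N * n : ℕ) : E) * α i ^ (r + N * n) = 0}.Infinite := by
    by_contra! hall
    apply hinf
    have hfin : (⋃ r ∈ Finset.range N, (fun n => r + N * n) ''
      {n : ℕ | ∑ i, (A i).eval ((r + N * n : ℕ) : E) * α i ^ (r + N * n) = 0}).Finite := by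
      refine Set.Finite.biUnion (Finset.finite_toSet _) fun r _ => ?_
      exact (hall r).image _
    refine hfin.subset fun n hn => ?_
    simp only [Set.mem_iUnion]
    refine ⟨n % N, Finset.mem_range.2 (Nat.mod_lt _ hN), n / N, ?_, Nat.mod_add_div n N⟩
    simp only [Set.mem_ofPred_eq]
    rw [Nat.mod_add_div]
    exact hn
  let g : ℚ_[p] → E := fun z =>
    ∑ i, (A i).eval ((r : E) + N * algebraMap ℚ_[p] E z) * α i ^ r * exp (z • l i)
  have hgn : ∀ n : ℕ, g n = ∑ i, (A i).eval ((r + N * n : ℕ) : E) * α i ^ (r + N * n) := by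
    intro n
    refine Finset.sum_congr rfl fun i _ => ?_
    rw [hexpn, pow_add, map_natCast]
    push_cast
    ring
  have hT : ((fun n : ℕ => (n : ℚ_[p])) ''
      {n : ℕ | ∑ i, (A i).eval ((r + N * n : ℕ) : E) * α i ^ (r + N * n) = 0}).Infinite :=
    hr.image (Nat.cast_injective.injOn)
  obtain ⟨z, hz, hacc⟩ := hT.exists_accPt_of_subset_isCompact
    (isCompact_closedBall (0 : ℚ_[p]) 1) (by
      rintro _ ⟨n, -, rfl⟩
      rw [mem_closedBall_zero_iff]
      exact hnat n)
  rw [mem_closedBall_zero_iff] at hz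
  have hg : AnalyticAt ℚ_[p] g z := by
    refine Finset.analyticAt_fun_sum _ fun i _ => ?_
    refine AnalyticAt.mul (AnalyticAt.mul ?_ analyticAt_const) ?_
    · refine AnalyticAt.aeval_polynomial (A := E) ?_ (A i)
      refine analyticAt_const.add (analyticAt_const.mul ?_)
      exact (Algebra.linearMap ℚ_[p] E).mkContinuous 1 (by simp) |>.analyticAt z
    · have h1 : AnalyticAt ℚ_[p] (fun z : ℚ_[p] => z • l i) z :=
        analyticAt_id.smul analyticAt_const
      exact AnalyticAt.comp (g := exp) (analyticAt_exp_of_mem_ball _ (hball i z hz)) h1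
  have hev : ∀ᶠ w in 𝓝 z, g w = 0 := by
    rcases hg.eventually_eq_zero_or_eventually_ne_zero with h | h
    · exact h
    · exfalso
      obtain ⟨w, ⟨n, hn, rfl⟩, hw⟩ := ((accPt_iff_frequently_nhdsNE.1 hacc).and_eventually h).exists
      exact hw ((hgn n).trans hn)
  obtain ⟨δ, hδ, hball'⟩ := Metric.eventually_nhds_iff.1 hev
  obtain ⟨M, hM⟩ := exists_pow_lt_of_lt_one hδ
    (show ((p : ℝ)⁻¹) < 1 from inv_lt_one_of_one_lt₀ (by exact_mod_cast hp.out.one_lt))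
  have hnorm : ∀ n : ℕ, ‖((p ^ M * n : ℕ) : ℚ_[p])‖ < δ := by
    intro n
    rw [Nat.cast_mul, Nat.cast_pow, norm_mul, norm_pow, Padic.norm_p]
    exact (mul_le_of_le_one_right (by positivity) (hnat n)).trans_lt hM
  have hpM : 0 < p ^ M := pow_pos hp.out.pos M
  let c : Fin m → E := fun i => α i ^ r * exp (z • l i)
  let q : E[X] := C ((N : E) * p ^ M) * X + C ((r : E) + N * algebraMap ℚ_[p] E z)
  have hNp : (N : E) * p ^ M ≠ 0 := by
    have : ((N * p ^ M : ℕ) : E) ≠ 0 := Nat.cast_ne_zero.2 (by positivity)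
    exact_mod_cast this
  have hzero := expPoly_indep (fun i => α i ^ (N * p ^ M)) (hinj _ (by positivity))
    (fun i => pow_ne_zero _ (h0 i)) (fun i => C (c i) * (A i).comp q) (by
      intro n
      have h1 := hball' (y := z + ((p ^ M * n : ℕ) : ℚ_[p])) (by
        rw [dist_eq_norm, add_sub_cancel_left]; exact hnorm n)
      rw [← h1]
      refine Finset.sum_congr rfl fun i _ => ?_
      rw [hadd i _ _ hz (hnat _), hexpn, map_add, map_natCast]
      simp only [eval_mul, eval_C, eval_comp, q, c, eval_add, eval_X]
      rw [← pow_mul, ← mul_assoc N]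
      push_cast
      have : (N : E) * p ^ M * n + (r + N * algebraMap ℚ_[p] E z) =
        r + N * (algebraMap ℚ_[p] E z + p ^ M * n) := by ring
      rw [this]
      ring)
  have := hzero ⟨0, hm⟩
  rcases mul_eq_zero.1 this with h | h
  · rw [C_eq_zero] at h
    exact mul_ne_zero (pow_ne_zero _ (h0 _)) (hexpne _ z hz) h
  · rw [comp_eq_zero_iff] at h
    rcases h with h | ⟨-, h⟩
    · exact hA _ h
    · have h2 : q.coeff 1 = 0 := by rw [h]; exact coeff_C_ne_zero one_ne_zero
      refine hNp ?_
      rw [← h2]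
      simp only [q, coeff_add, coeff_C_mul, coeff_X_one, mul_one, coeff_C_ne_zero one_ne_zero,
        add_zero]

end SML

/-- A non-degenerate recurrent sequence with values in a number field `K`
which is not identically zero has only finitely many zero terms. Non-degenerate
recurrent is expressed via a generalized power sum representation with distinct nonzero
roots in the algebraic closure of `K`, no ratio of which is a root of unity. -/
theorem nondegenerate_finitely_many_zeros
    (K : Type*) [Field K] [NumberField K] (a : ℕ → K)
    (m : ℕ) (α : Fin m → AlgebraicClosure K)
    (A : Fin m → Polynomial (AlgebraicClosure K))
    (hinj : Function.Injective α) (hα : ∀ i, α i ≠ 0) (hA : ∀ i, A i ≠ 0)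
    (hnd : ∀ i j, i ≠ j → ∀ k : ℕ, 0 < k → (α i / α j) ^ k ≠ 1)
    (hrep : ∀ n : ℕ,
      algebraMap K (AlgebraicClosure K) (a n) =
        ∑ i, (A i).eval (n : AlgebraicClosure K) * α i ^ n)
    (hne : ∃ n : ℕ, a n ≠ 0) :
    {n : ℕ | a n = 0}.Finite := by
  have hm : 0 < m := by
    rcases Nat.eq_zero_or_pos m with h | h
    · subst h
      obtain ⟨n, hn⟩ := hne
      exact absurd (by simpa using hrep n) hn
    · exact h
  have halg : Algebra.IsAlgebraic ℚ (AlgebraicClosure K) :=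
    Algebra.IsAlgebraic.trans ℚ K (AlgebraicClosure K)
  obtain ⟨p, hp, hnorm⟩ := SML.exists_prime (AlgebraicClosure K) α hα
  let φ : AlgebraicClosure K →ₐ[ℚ] PadicAlgCl p := IsAlgClosed.lift
  let ψ : AlgebraicClosure K →+* ℂ_[p] :=
    (algebraMap (PadicAlgCl p) ℂ_[p]).comp φ.toRingHom
  obtain ⟨ε, hε, hlog⟩ := SML.exists_log p ℂ_[p]
  obtain ⟨N, hN, hnear⟩ := SML.exists_pow_near p (fun i => φ (α i))
    (fun i => hnorm φ.toRingHom i) ε hε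
  choose l hl hexp using fun i => hlog (ψ (α i) ^ N) (by
    have h1 : ψ (α i) ^ N - 1 = ((φ (α i) ^ N - 1 : PadicAlgCl p) : ℂ_[p]) := by
      rw [PadicComplex.coe_eq, map_sub, map_pow, map_one]
      rfl
    rw [h1, PadicComplex.norm_extends]
    exact hnear i)
  have key := SML.main_padic p ℂ_[p] hm (fun i => ψ (α i)) (fun i => (A i).map ψ)
    (fun i => (map_ne_zero ψ).2 (hα i)) (fun i => (Polynomial.map_ne_zero_iff ψ.injective).2 (hA i))
    (fun k hk i j hij => by
      by_contra hne
      have h1 : ψ (α i ^ k) = ψ (α j ^ k) := by simpa using hij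
      refine hnd i j hne k hk ?_
      rw [div_pow, ψ.injective h1, div_self (pow_ne_zero _ (hα j))])
    N hN l hl hexp
  refine key.subset fun n hn => ?_
  have h1 : (∑ i, (A i).eval (n : AlgebraicClosure K) * α i ^ n) = 0 := by
    rw [← hrep n, show a n = 0 from hn, map_zero]
  have h2 := congrArg ψ h1
  rw [map_zero, map_sum] at h2
  change (∑ i, ((A i).map ψ).eval (n : ℂ_[p]) * ψ (α i) ^ n) = 0
  rw [← h2]
  refine Finset.sum_congr rfl fun i _ => ?_
  rw [map_mul, map_pow, eval_natCast_map]
end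

section
/- Let N_n ⊂ ℝ^r be a sequence of lattice polytopes whose vertices are given by quasi-linear functions of n (i.e., N_n = conv{v_i(n)} with each coordinate of v_i a quasi-polynomial of degree ≤ 1 taking integer values). Then the number of lattice points |N_n ∩ ℤ^r| is a quasi-polynomial function of n for all sufficiently large n. -/
namespace QPCount

/-- Indicator of a proposition. -/
noncomputable def ind (p : Prop) : ℚ := open Classical in if p then 1 else 0

lemma ind_pos {p : Prop} (h : p) : ind p = 1 := by simp [ind, h]
lemma ind_neg {p : Prop} (h : ¬ p) : ind p = 0 := by simp [ind, h]
lemma ind_congr {p q : Prop} (h : p ↔ q) : ind p = ind q := by rw [propext h]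

/-- Quasi-polynomials on `ℕ`. -/
def IsQP (h : ℕ → ℚ) : Prop :=
  ∃ D : ℕ, 0 < D ∧ ∃ P : ℕ → Polynomial ℚ, ∀ n, h n = (P (n % D)).eval (n : ℚ)

lemma IsQP.poly (P : Polynomial ℚ) : IsQP (fun n => P.eval (n : ℚ)) :=
  ⟨1, one_pos, fun _ => P, fun _ => rfl⟩

lemma IsQP.mul {f g : ℕ → ℚ} (hf : IsQP f) (hg : IsQP g) : IsQP (fun n => f n * g n) := by
  obtain ⟨D, hD, P, hP⟩ := hf
  obtain ⟨E, hE, Q, hQ⟩ := hg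
  refine ⟨D * E, Nat.mul_pos hD hE, fun s => P (s % D) * Q (s % E), fun n => ?_⟩
  simp only [Polynomial.eval_mul, Nat.mod_mul_right_mod, Nat.mod_mul_left_mod, hP, hQ]

lemma IsQP.add {f g : ℕ → ℚ} (hf : IsQP f) (hg : IsQP g) : IsQP (fun n => f n + g n) := by
  obtain ⟨D, hD, P, hP⟩ := hf
  obtain ⟨E, hE, Q, hQ⟩ := hg
  refine ⟨D * E, Nat.mul_pos hD hE, fun s => P (s % D) + Q (s % E), fun n => ?_⟩
  simp only [Polynomial.eval_add, Nat.mod_mul_right_mod, Nat.mod_mul_left_mod, hP, hQ]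

lemma IsQP.const (c : ℚ) : IsQP (fun _ => c) := by
  simpa using IsQP.poly (Polynomial.C c)

lemma IsQP.mod (d : ℕ) (hd : 0 < d) (p : ℕ → Prop) : IsQP (fun n => ind (p (n % d))) :=
  ⟨d, hd, fun s => Polynomial.C (ind (p s)), fun n => by simp⟩

/-- Faulhaber: sums of polynomials are polynomials. -/
lemma exists_sum_poly (P : Polynomial ℚ) :
    ∃ Q : Polynomial ℚ, ∀ n : ℕ, ∑ x ∈ Finset.range n, P.eval (x : ℚ) = Q.eval (n : ℚ) := by
  induction P using Polynomial.induction_on' with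
  | add p q hp hq =>
    obtain ⟨A, hA⟩ := hp
    obtain ⟨B, hB⟩ := hq
    exact ⟨A + B, fun n => by simp [Finset.sum_add_distrib, hA, hB]⟩
  | monomial k a =>
    refine ⟨Polynomial.C a * ∑ i ∈ Finset.range (k + 1),
      Polynomial.C (bernoulli i * ((k + 1).choose i) / (k + 1)) * Polynomial.X ^ (k + 1 - i),
      fun n => ?_⟩
    simp only [Polynomial.eval_monomial, ← Finset.mul_sum, sum_range_pow, Polynomial.eval_mul,
      Polynomial.eval_C, Polynomial.eval_finsetSum, Polynomial.eval_pow, Polynomial.eval_X]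
    congr 1
    refine Finset.sum_congr rfl fun i _ => ?_
    ring

lemma IsQP.sum {h : ℕ → ℚ} (hh : IsQP h) : IsQP (fun n => ∑ x ∈ Finset.range n, h x) := by
  obtain ⟨D, hD, P, hP⟩ := hh
  -- polynomial for a full block
  obtain ⟨G, hG⟩ := exists_sum_poly (∑ a ∈ Finset.range D,
    (P a).comp (Polynomial.C (D : ℚ) * Polynomial.X + Polynomial.C (a : ℚ)))
  have hval : ∀ t a : ℕ, a < D → h (D * t + a) =
      ((P a).comp (Polynomial.C (D : ℚ) * Polynomial.X + Polynomial.C (a : ℚ))).eval (t : ℚ) := by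
    intro t a ha
    rw [hP, Nat.mul_add_mod, Nat.mod_eq_of_lt ha]
    simp
  have hblock : ∀ t : ℕ, ∑ x ∈ Finset.range (D * t), h x = G.eval (t : ℚ) := by
    intro t
    rw [← hG]
    induction t with
    | zero => simp
    | succ t ih =>
      rw [Nat.mul_succ, Finset.sum_range_add, ih, Finset.sum_range_succ, Polynomial.eval_finsetSum]
      congr 1
      exact Finset.sum_congr rfl fun a ha => hval t a (Finset.mem_range.1 ha)
  refine ⟨D, hD, fun s => (G + ∑ a ∈ Finset.range s,
    (P a).comp (Polynomial.C (D : ℚ) * Polynomial.X + Polynomial.C (a : ℚ))).comp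
      (Polynomial.C ((D : ℚ)⁻¹) * (Polynomial.X - Polynomial.C (s : ℚ))), fun n => ?_⟩
  have hn : D * (n / D) + n % D = n := Nat.div_add_mod n D
  have hD' : (D : ℚ) ≠ 0 := by positivity
  have hq : (D : ℚ)⁻¹ * ((n : ℚ) - (n % D : ℕ)) = ((n / D : ℕ) : ℚ) := by
    have : (n : ℚ) = D * ((n / D : ℕ) : ℚ) + ((n % D : ℕ) : ℚ) := by exact_mod_cast hn.symm
    rw [this]; field_simp; ring
  rw [Polynomial.eval_comp]
  simp only [Polynomial.eval_mul, Polynomial.eval_C, Polynomial.eval_sub, Polynomial.eval_X]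
  rw [hq, Polynomial.eval_add, ← hblock, Polynomial.eval_finsetSum]
  conv_lhs => rw [← hn]
  rw [Finset.sum_range_add]
  congr 1
  exact Finset.sum_congr rfl fun a ha =>
    hval _ a (lt_trans (Finset.mem_range.1 ha) (Nat.mod_lt _ hD))

/-! ### The algebra of piecewise quasi-polynomials -/

section PQ
variable {Y : Type}

/-- Piecewise quasi-polynomial functions built from a group `L` of integer linear forms. -/
def PQ (L : AddSubgroup (Y → ℤ)) : Subalgebra ℚ (Y → ℚ) :=
  Algebra.adjoin ℚ ({f | ∃ l ∈ L, f = fun y => (l y : ℚ)} ∪ {f | ∃ l ∈ L, f = fun y => ind (0 ≤ l y)}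
    ∪ {f | ∃ d : ℕ, 0 < d ∧ ∃ l ∈ L, f = fun y => ind ((d : ℤ) ∣ l y)})

variable {L : AddSubgroup (Y → ℤ)}

lemma PQ.lin {l : Y → ℤ} (hl : l ∈ L) : (fun y => (l y : ℚ)) ∈ PQ L :=
  Algebra.subset_adjoin (Or.inl (Or.inl ⟨l, hl, rfl⟩))

lemma PQ.ge {l : Y → ℤ} (hl : l ∈ L) : (fun y => ind (0 ≤ l y)) ∈ PQ L :=
  Algebra.subset_adjoin (Or.inl (Or.inr ⟨l, hl, rfl⟩))

lemma PQ.dvd {l : Y → ℤ} (hl : l ∈ L) {d : ℕ} (hd : 0 < d) :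
    (fun y => ind ((d : ℤ) ∣ l y)) ∈ PQ L :=
  Algebra.subset_adjoin (Or.inr ⟨d, hd, l, hl, rfl⟩)

lemma PQ.add {f g : Y → ℚ} (hf : f ∈ PQ L) (hg : g ∈ PQ L) : (fun y => f y + g y) ∈ PQ L :=
  (PQ L).add_mem hf hg
lemma PQ.sub {f g : Y → ℚ} (hf : f ∈ PQ L) (hg : g ∈ PQ L) : (fun y => f y - g y) ∈ PQ L :=
  (PQ L).sub_mem hf hg
lemma PQ.mul {f g : Y → ℚ} (hf : f ∈ PQ L) (hg : g ∈ PQ L) : (fun y => f y * g y) ∈ PQ L :=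
  (PQ L).mul_mem hf hg
lemma PQ.const (c : ℚ) : (fun _ => c : Y → ℚ) ∈ PQ L := (PQ L).algebraMap_mem c
lemma PQ.sum {ι : Type*} (s : Finset ι) {f : ι → Y → ℚ} (hf : ∀ i ∈ s, f i ∈ PQ L) :
    (fun y => ∑ i ∈ s, f i y) ∈ PQ L := by
  have := (PQ L).sum_mem hf
  convert this using 1
  ext y; simp
lemma PQ.prod {ι : Type*} (s : Finset ι) {f : ι → Y → ℚ} (hf : ∀ i ∈ s, f i ∈ PQ L) :
    (fun y => ∏ i ∈ s, f i y) ∈ PQ L := by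
  have := (PQ L).prod_mem hf
  convert this using 1
  ext y; simp
lemma PQ.poly (P : Polynomial ℚ) {f : Y → ℚ} (hf : f ∈ PQ L) :
    (fun y => P.eval (f y)) ∈ PQ L := by
  induction P using Polynomial.induction_on' with
  | add p q hp hq => simpa using PQ.add hp hq
  | monomial k a =>
    simpa using PQ.mul (PQ.const a) ((PQ L).pow_mem hf k)

lemma PQ.mem_congr {f g : Y → ℚ} (hf : f ∈ PQ L) (h : ∀ y, g y = f y) : g ∈ PQ L := by
  rwa [show g = f from funext h]

/-- sum over residues picks out one term -/
lemma sum_residue (d : ℕ) (hd : 0 < d) (z : ℤ) (F : ℕ → ℚ) :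
    ∑ s ∈ Finset.range d, ind ((d : ℤ) ∣ z - s) * F s = F (z % d).toNat := by
  have hd' : (0 : ℤ) < d := by exact_mod_cast hd
  have h0 := Int.emod_nonneg z hd'.ne'
  have h1 := Int.emod_lt_of_pos z hd'
  rw [Finset.sum_eq_single (z % d).toNat]
  · rw [ind_pos, one_mul]
    rw [Int.toNat_of_nonneg h0]
    exact Int.dvd_self_sub_emod
  · intro s hs hne
    rw [ind_neg, zero_mul]
    intro hdvd
    apply hne
    have hs' : (s : ℤ) < d := by exact_mod_cast Finset.mem_range.1 hs
    have : z % d = s := by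
      have := Int.emod_emod_of_dvd z (dvd_refl (d : ℤ))
      rw [Int.emod_eq_emod_iff_emod_sub_eq_zero.2 (Int.emod_eq_zero_of_dvd hdvd)]
      exact Int.emod_eq_of_lt (by positivity) hs'
    omega
  · intro h
    exfalso; apply h
    rw [Finset.mem_range]; omega

lemma PQ.residue (hc : ∀ c : ℤ, (fun _ => c) ∈ L) {l : Y → ℤ} (hl : l ∈ L) {d : ℕ} (hd : 0 < d)
    {F : ℕ → Y → ℚ} (hF : ∀ s, F s ∈ PQ L) : (fun y => F (l y % d).toNat y) ∈ PQ L := by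
  refine PQ.mem_congr (f := fun y => ∑ s ∈ Finset.range d, ind ((d : ℤ) ∣ l y - s) * F s y) ?_ ?_
  · refine PQ.sum _ fun s _ => PQ.mul (PQ.dvd (l := fun y => l y - s) ?_ hd) (hF s)
    exact L.sub_mem hl (hc s)
  · intro y
    rw [sum_residue d hd (l y) (fun s => F s y)]

lemma PQ.floor (hc : ∀ c : ℤ, (fun _ => c) ∈ L) {l : Y → ℤ} (hl : l ∈ L) {d : ℕ} (hd : 0 < d) :
    (fun y => ((l y / d : ℤ) : ℚ)) ∈ PQ L := by
  refine PQ.mem_congr (PQ.residue hc hl hd (F := fun s y => ((l y : ℚ) - s) * (d : ℚ)⁻¹)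
    fun s => PQ.mul (PQ.sub (PQ.lin hl) (PQ.const _)) (PQ.const _)) fun y => ?_
  have hd' : (0 : ℤ) < d := by exact_mod_cast hd
  have h0 := Int.emod_nonneg (l y) hd'.ne'
  have hD : (d : ℚ) ≠ 0 := by positivity
  have e : (((l y % d).toNat : ℕ) : ℚ) = ((l y % d : ℤ) : ℚ) := by
    rw [← Int.cast_natCast, Int.toNat_of_nonneg h0]
  have h2 : ((l y : ℤ) : ℚ) = d * ((l y / d : ℤ) : ℚ) + ((l y % d : ℤ) : ℚ) := by
    exact_mod_cast (Int.mul_ediv_add_emod (l y) d).symm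
  rw [e]
  field_simp
  linarith

lemma PQ.floor_le (hc : ∀ c : ℤ, (fun _ => c) ∈ L) {l l' : Y → ℤ} (hl : l ∈ L) (hl' : l' ∈ L)
    {d d' : ℕ} (hd : 0 < d) (hd' : 0 < d') :
    (fun y => ind (l' y / d' ≤ l y / d)) ∈ PQ L := by
  refine PQ.mem_congr (PQ.residue hc hl' hd'
    (F := fun s y => ind (0 ≤ ((d' : ℤ) * l y - (d : ℤ) * (l' y - s))))
    fun s => PQ.ge (l := fun y => ((d' : ℤ) * l y - (d : ℤ) * (l' y - s))) ?_) fun y => ?_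
  · have := L.sub_mem (L.zsmul_mem hl d') (L.zsmul_mem (L.sub_mem hl' (hc s)) d)
    convert this using 1
    ext y; simp
  · have p1 : (0 : ℤ) < d := by exact_mod_cast hd
    have p2 : (0 : ℤ) < d' := by exact_mod_cast hd'
    have h0 := Int.emod_nonneg (l' y) p2.ne'
    apply ind_congr
    rw [Int.toNat_of_nonneg h0, Int.le_ediv_iff_mul_le p1]
    have e := Int.mul_ediv_add_emod (l' y) d'
    have : (d' : ℤ) * l y - d * (l' y - l' y % d') = d' * (l y - l' y / d' * d) := by
      have : l' y - l' y % d' = d' * (l' y / d') := by linarith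
      rw [this]; ring
    rw [this, mul_nonneg_iff_of_pos_left p2, sub_nonneg]

lemma PQ.floor_dvd (hc : ∀ c : ℤ, (fun _ => c) ∈ L) {l : Y → ℤ} (hl : l ∈ L)
    {d D : ℕ} (hd : 0 < d) (hD : 0 < D) (a : ℤ) :
    (fun y => ind ((D : ℤ) ∣ l y / d - a)) ∈ PQ L := by
  have h1 : ∀ b : ℤ, (fun y => (((l y / d - b) / D : ℤ) : ℚ)) ∈ PQ L := by
    intro b
    have hm : (fun y => l y - d * b) ∈ L := L.sub_mem hl (hc _)
    refine PQ.mem_congr (PQ.floor hc hm (Nat.mul_pos hd hD)) fun y => ?_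
    have p1 : (d : ℤ) ≠ 0 := by positivity
    push_cast
    rw [← Int.ediv_ediv_of_nonneg (by positivity), sub_eq_add_neg (l y), ← mul_neg,
      Int.add_mul_ediv_left _ _ p1, sub_eq_add_neg]
  refine PQ.mem_congr (PQ.sub (h1 a) (h1 (a + 1))) fun y => ?_
  have p2 : (0 : ℤ) < D := by exact_mod_cast hD
  set z := l y / d - a with hz
  have : l y / d - (a + 1) = z - 1 := by omega
  rw [this]
  have e1 := Int.mul_ediv_add_emod z D
  have e2 := Int.mul_ediv_add_emod (z - 1) D
  have a1 := Int.emod_nonneg z p2.ne'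
  have a2 := Int.emod_nonneg (z - 1) p2.ne'
  have a3 := Int.emod_lt_of_pos z p2
  have a4 := Int.emod_lt_of_pos (z - 1) p2
  by_cases h : (D : ℤ) ∣ z
  · rw [ind_pos h]
    have h3 : z % D = 0 := Int.emod_eq_zero_of_dvd h
    have : z / D = (z - 1) / D + 1 := by
      rw [h3] at e1
      have u1 : (D : ℤ) * (z / D - (z - 1) / D) = 1 + (z - 1) % D := by linarith
      have u2 : 0 < z / D - (z - 1) / D := by
        by_contra hcon; push Not at hcon; nlinarith
      have u3 : z / D - (z - 1) / D < 2 := by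
        by_contra hcon; push Not at hcon; nlinarith
      omega
    rw [this]; push_cast; ring
  · rw [ind_neg h]
    have h3 : z % D ≠ 0 := fun h' => h (Int.dvd_of_emod_eq_zero h')
    have : z / D = (z - 1) / D := by
      have h4 : 1 ≤ z % D := by omega
      have u1 : (D : ℤ) * (z / D - (z - 1) / D) = 1 + (z - 1) % D - z % D := by linarith
      have u2 : -1 < z / D - (z - 1) / D := by
        by_contra hcon; push Not at hcon; nlinarith
      have u3 : z / D - (z - 1) / D < 1 := by
        by_contra hcon; push Not at hcon; nlinarith
      omega
    rw [this]; ring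

lemma PQ.floor_nonneg {l : Y → ℤ} (hl : l ∈ L)
    {d : ℕ} (hd : 0 < d) : (fun y => ind (0 ≤ l y / d)) ∈ PQ L := by
  have p1 : (0 : ℤ) < d := by exact_mod_cast hd
  exact PQ.mem_congr (PQ.ge hl) fun y => ind_congr (Int.ediv_nonneg_iff_of_pos p1)

/-- composing a quasi-polynomial with a floor -/
lemma PQ.comp_floor (hc : ∀ c : ℤ, (fun _ => c) ∈ L) {l : Y → ℤ} (hl : l ∈ L)
    {d : ℕ} (hd : 0 < d) {F : ℕ → ℚ} (hF : IsQP F) :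
    (fun y => ind (0 ≤ l y / d) * F (l y / d).toNat) ∈ PQ L := by
  obtain ⟨D, hD, P, hP⟩ := hF
  refine PQ.mem_congr (PQ.mul (PQ.floor_nonneg hl hd) (PQ.sum (Finset.range D)
    (f := fun s y => ind ((D : ℤ) ∣ l y / d - s) * (P s).eval ((l y / d : ℤ) : ℚ))
    fun s _ => PQ.mul (PQ.floor_dvd hc hl hd hD s) (PQ.poly _ (PQ.floor hc hl hd)))) fun y => ?_
  by_cases h : 0 ≤ l y / d
  · rw [ind_pos h, one_mul, one_mul,
      sum_residue D hD (l y / d) (fun s => (P s).eval ((l y / d : ℤ) : ℚ)), hP]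
    obtain ⟨m, hm⟩ := Int.eq_ofNat_of_zero_le h
    rw [hm, ← Int.natCast_mod]
    simp only [Int.toNat_natCast, Int.cast_natCast]
  · rw [ind_neg h]; simp

/-- normal forms in one extra variable -/
inductive NF (L : AddSubgroup (Y → ℤ)) : (Y → ℕ → ℚ) → Prop
  | term (g : Y → ℚ) (h : ℕ → ℚ) (l : Y → ℤ) (d : ℕ) (hg : g ∈ PQ L) (hh : IsQP h) (hl : l ∈ L)
      (hd : 0 < d) : NF L (fun y x => g y * h x * ind (l y / d < x))
  | add (f f' : Y → ℕ → ℚ) (hf : NF L f) (hf' : NF L f') : NF L (fun y x => f y x + f' y x)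

lemma NF.congr {f g : Y → ℕ → ℚ} (hf : NF L f) (h : ∀ y x, g y x = f y x) : NF L g := by
  rwa [show g = f from funext fun y => funext fun x => h y x]

lemma NF.simple (hc : ∀ c : ℤ, (fun _ => c) ∈ L) {g : Y → ℚ} {h : ℕ → ℚ} (hg : g ∈ PQ L)
    (hh : IsQP h) : NF L (fun y x => g y * h x) := by
  refine NF.congr (NF.term g h (fun _ => -1) 1 hg hh (hc _) one_pos) fun y x => ?_
  rw [ind_pos, mul_one]
  simp; omega

lemma NF.mul (hc : ∀ c : ℤ, (fun _ => c) ∈ L) {f f' : Y → ℕ → ℚ} (hf : NF L f) (hf' : NF L f') :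
    NF L (fun y x => f y x * f' y x) := by
  induction hf with
  | add f1 f2 _ _ h1 h2 =>
    exact NF.congr (NF.add _ _ h1 h2) fun y x => add_mul _ _ _
  | term g h l d hg hh hl hd =>
    induction hf' with
    | add f1 f2 _ _ h1 h2 =>
      exact NF.congr (NF.add _ _ h1 h2) fun y x => mul_add _ _ _
    | term g' h' l' d' hg' hh' hl' hd' =>
      refine NF.congr (NF.add _ _
        (NF.term (fun y => (g y * g' y) * ind (l' y / d' ≤ l y / d)) (fun x => h x * h' x) l d
          (PQ.mul (PQ.mul hg hg') (PQ.floor_le hc hl hl' hd hd')) (hh.mul hh') hl hd)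
        (NF.term (fun y => (g y * g' y) * (1 - ind (l' y / d' ≤ l y / d))) (fun x => h x * h' x) l' d'
          (PQ.mul (PQ.mul hg hg') (PQ.sub (PQ.const 1) (PQ.floor_le hc hl hl' hd hd')))
          (hh.mul hh') hl' hd')) fun y x => ?_
      beta_reduce
      by_cases hle : l' y / d' ≤ l y / d
      · rw [ind_pos hle]
        by_cases h1 : l y / d < x
        · rw [ind_pos h1, ind_pos (lt_of_le_of_lt hle h1)]; ring
        · rw [ind_neg h1]; ring
      · rw [ind_neg hle]
        push Not at hle
        by_cases h1 : l' y / d' < x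
        · rw [ind_pos h1, ind_pos (lt_trans hle h1)]; ring
        · rw [ind_neg h1]; ring

lemma NF.sum (hc : ∀ c : ℤ, (fun _ => c) ∈ L) {f : Y → ℕ → ℚ} (hf : NF L f)
    {N : Y → ℕ} (hN : (fun y => (N y : ℤ)) ∈ L) :
    (fun y => ∑ x ∈ Finset.range (N y), f y x) ∈ PQ L := by
  induction hf with
  | add f1 f2 _ _ h1 h2 =>
    exact PQ.mem_congr (PQ.add h1 h2) fun y => Finset.sum_add_distrib
  | term g h l d hg hh hl hd =>
    have hF := hh.sum
    have hl1 : (fun y => l y + d) ∈ L := L.add_mem hl (hc d)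
    have p1 : (0 : ℤ) < d := by exact_mod_cast hd
    refine PQ.mem_congr (PQ.mul (PQ.mul hg (PQ.floor_le hc hN hl1 one_pos hd))
      (PQ.sub (PQ.comp_floor hc hN one_pos hF) (PQ.comp_floor hc hl1 hd hF))) fun y => ?_
    simp only [mul_assoc, ← Finset.mul_sum]
    congr 1
    have e1 : (l y + d) / d = l y / d + 1 := by
      rw [Int.add_ediv_of_dvd_right (dvd_refl _), Int.ediv_self p1.ne']
    simp only [e1, Nat.cast_one, Int.ediv_one, Int.toNat_natCast]
    set b := l y / d
    by_cases hb : b + 1 ≤ (N y : ℤ)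
    · rw [ind_pos hb, one_mul, ind_pos (p := 0 ≤ (N y : ℤ)) (by positivity), one_mul]
      have hle : (b + 1).toNat ≤ N y := by omega
      have e2 : ind (0 ≤ b + 1) * ∑ x ∈ Finset.range (b + 1).toNat, h x
          = ∑ x ∈ Finset.range (b + 1).toNat, h x := by
        by_cases h0 : 0 ≤ b + 1
        · rw [ind_pos h0, one_mul]
        · have : (b + 1).toNat = 0 := by omega
          rw [this]; simp
      rw [e2, eq_sub_iff_add_eq']
      obtain ⟨m, hm⟩ := Nat.exists_eq_add_of_le hle
      rw [hm, Finset.sum_range_add, Finset.sum_range_add]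
      rw [Finset.sum_eq_zero (s := Finset.range (b + 1).toNat) (f := fun x => h x * ind (b < x)),
        zero_add]
      · congr 1
        refine Finset.sum_congr rfl fun x _ => ?_
        rw [ind_pos, mul_one]
        push_cast; omega
      · intro x hx
        rw [Finset.mem_range] at hx
        rw [ind_neg, mul_zero]
        omega
    · rw [ind_neg hb, zero_mul]
      refine Finset.sum_eq_zero fun x hx => ?_
      rw [Finset.mem_range] at hx
      rw [ind_neg, mul_zero]
      omega

/-- summation over one variable preserves piecewise quasi-polynomials -/
lemma PQ.sum_var {Y' : Type} {L' : AddSubgroup (Y' → ℤ)} (e : Y → ℕ → Y')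
    (he : ∀ l' ∈ L', ∃ l ∈ L, ∃ c : ℤ, ∀ y x, l' (e y x) = l y + c * x)
    (hc : ∀ c : ℤ, (fun _ => c) ∈ L) {N : Y → ℕ} (hN : (fun y => (N y : ℤ)) ∈ L)
    {f : Y' → ℚ} (hf : f ∈ PQ L') :
    (fun y => ∑ x ∈ Finset.range (N y), f (e y x)) ∈ PQ L := by
  refine NF.sum hc (f := fun y x => f (e y x)) ?_ hN
  induction hf using Algebra.adjoin_induction with
  | algebraMap r =>
    exact NF.congr (NF.simple hc (PQ.const r) (IsQP.const 1)) fun y x => by simp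
  | add f g _ _ hf hg => exact NF.add _ _ hf hg
  | mul f g _ _ hf hg => exact NF.mul hc hf hg
  | mem f hf =>
    rcases hf with (⟨l', hl', rfl⟩ | ⟨l', hl', rfl⟩) | ⟨d, hd, l', hl', rfl⟩
    · obtain ⟨l, hl, c, h⟩ := he l' hl'
      refine NF.congr (NF.add _ _ (NF.simple hc (PQ.lin hl) (IsQP.const 1))
        (NF.simple hc (PQ.const (c : ℚ)) (IsQP.poly Polynomial.X))) fun y x => ?_
      simp [h]
    · obtain ⟨l, hl, c, h⟩ := he l' hl'
      rcases lt_trichotomy c 0 with hc0 | hc0 | hc0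
      · obtain ⟨d, rfl⟩ : ∃ d : ℕ, c = -d := ⟨c.natAbs, by omega⟩
        have p1 : (0 : ℤ) < d := by omega
        refine NF.congr (NF.add _ _ (NF.simple hc (PQ.const 1) (IsQP.const 1))
          (NF.term (fun _ => -1) (fun _ => 1) l d (PQ.const _) (IsQP.const 1) hl (by omega)))
          fun y x => ?_
        beta_reduce
        by_cases hx : l y / d < x
        · rw [ind_pos hx, ind_neg]; · ring
          rw [Int.ediv_lt_iff_lt_mul p1] at hx
          rw [h]; push Not; linarith
        · rw [ind_neg hx, ind_pos]; · ring
          rw [Int.ediv_lt_iff_lt_mul p1] at hx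
          rw [h]; linarith
      · subst hc0
        refine NF.congr (NF.simple hc (PQ.ge hl) (IsQP.const 1)) fun y x => ?_
        simp [h]
      · obtain ⟨d, rfl⟩ := Int.eq_ofNat_of_zero_le hc0.le
        have hl1 : (fun y => - l y - 1) ∈ L := L.sub_mem (L.neg_mem hl) (hc 1)
        refine NF.congr 
          (NF.term (fun _ => 1) (fun _ => 1) _ d (PQ.const _) (IsQP.const 1) hl1 (by omega))
          fun y x => ?_
        rw [one_mul, one_mul]
        apply ind_congr
        rw [Int.ediv_lt_iff_lt_mul hc0, h]
        constructor <;> intro <;> linarith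
    · obtain ⟨l, hl, c, h⟩ := he l' hl'
      have key : ∀ s : Finset ℕ, NF L (fun y x => ∑ a ∈ s, ind ((d : ℤ) ∣ l y + c * a) *
          ind (x % d = a)) := by
        intro s
        induction s using Finset.induction_on with
        | empty => exact NF.congr (NF.simple hc (PQ.const 0) (IsQP.const 0)) fun y x => by simp
        | insert a s ha ih =>
          refine NF.congr (NF.add _ _ (NF.simple hc
            (PQ.dvd (L.add_mem hl (hc (c * a))) hd) (IsQP.mod d hd (fun z => z = a))) ih)
            fun y x => ?_
          rw [Finset.sum_insert ha]; rfl
      refine NF.congr (key (Finset.range d)) fun y x => ?_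
      rw [Finset.sum_eq_single (x % d)]
      · rw [ind_pos (p := x % d = x % d) rfl, mul_one]
        apply ind_congr
        rw [h]
        have e1 : (x : ℤ) = d * (x / d : ℕ) + (x % d : ℕ) := by
          exact_mod_cast (Nat.div_add_mod x d).symm
        have : l y + c * x = l y + c * (x % d : ℕ) + d * (c * (x / d : ℕ)) := by
          conv_lhs => rw [e1]
          ring
        rw [this]
        exact (dvd_add_left (Dvd.intro _ rfl))
      · intro a _ hne
        rw [ind_neg (p := x % d = a) (fun h => hne h.symm), mul_zero]
      · intro h
        exact absurd (Finset.mem_range.2 (Nat.mod_lt _ hd)) h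

end PQ

end QPCount
namespace QPCount
open Filter

/-! ### Fourier-Motzkin elimination -/

lemma fm_one {ι : Type*} (S : Set ι) (hS : S.Finite) (a b : ι → ℝ) :
    (∃ t : ℝ, ∀ c ∈ S, 0 ≤ a c * t + b c) ↔
      (∀ c ∈ S, a c = 0 → 0 ≤ b c) ∧
      ∀ p ∈ S, ∀ q ∈ S, 0 < a p → a q < 0 → 0 ≤ -a q * b p + a p * b q := by
  constructor
  · rintro ⟨t, ht⟩
    refine ⟨fun c hc h0 => by simpa [h0] using ht c hc, fun p hp q hq h1 h2 => ?_⟩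
    have e1 := mul_nonneg (neg_nonneg.2 h2.le) (ht p hp)
    have e2 := mul_nonneg h1.le (ht q hq)
    nlinarith
  · rintro ⟨h0, hpq⟩
    set lo : Set ℝ := Set.image (fun c => -b c / a c) {c ∈ S | 0 < a c} with hlo
    set up : Set ℝ := Set.image (fun c => -b c / a c) {c ∈ S | a c < 0} with hup
    have flo : lo.Finite := (hS.subset fun c hc => hc.1).image _
    have fup : up.Finite := (hS.subset fun c hc => hc.1).image _
    have key : ∃ t, t ∈ upperBounds lo ∧ t ∈ lowerBounds up := by
      rcases lo.eq_empty_or_nonempty with h1 | h1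
      · obtain ⟨t, ht⟩ := fup.bddBelow
        exact ⟨t, by simp [h1], ht⟩
      rcases up.eq_empty_or_nonempty with h2 | h2
      · obtain ⟨t, ht⟩ := flo.bddAbove
        exact ⟨t, ht, by simp [h2]⟩
      refine exists_between_of_forall_le h1 h2 ?_
      rintro _ ⟨p, ⟨hp, hp0⟩, rfl⟩ _ ⟨q, ⟨hq, hq0⟩, rfl⟩
      have := hpq p hp q hq hp0 hq0
      have hq1 : 0 < - a q := by linarith
      have e : -b q / a q = b q / (-a q) := by rw [div_neg, neg_div]
      show -b p / a p ≤ -b q / a q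
      rw [e, div_le_div_iff₀ hp0 hq1]
      linarith
    obtain ⟨t, ht1, ht2⟩ := key
    refine ⟨t, fun c hc => ?_⟩
    rcases lt_trichotomy (a c) 0 with h | h | h
    · have := ht2 ⟨c, ⟨hc, h⟩, rfl⟩
      change t ≤ -b c / a c at this
      rw [le_div_iff_of_neg h] at this
      linarith
    · rw [h]; simpa using h0 c hc h
    · have := ht1 ⟨c, ⟨hc, h⟩, rfl⟩
      change -b c / a c ≤ t at this
      rw [div_le_iff₀ h] at this
      linarith

lemma poly_eventually_pos (P : Polynomial ℤ) (h : 0 < P.leadingCoeff) :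
    ∀ᶠ n : ℕ in atTop, 0 < P.eval (n : ℤ) := by
  by_cases hd : 0 < P.degree
  · set Q : Polynomial ℝ := P.map (Int.castRingHom ℝ) with hQ
    have hinj : Function.Injective (Int.castRingHom ℝ) := Int.cast_injective
    have hQd : 0 < Q.degree := by rwa [hQ, Polynomial.degree_map_eq_of_injective hinj]
    have hQl : 0 ≤ Q.leadingCoeff := by
      rw [hQ, Polynomial.leadingCoeff_map_of_injective hinj]
      simpa using h.le
    have ht := (Polynomial.tendsto_atTop_of_leadingCoeff_nonneg Q hQd hQl).comp
      (tendsto_natCast_atTop_atTop (R := ℝ))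
    filter_upwards [ht.eventually_gt_atTop 0] with n hn
    have e : Q.eval (n : ℝ) = ((P.eval (n : ℤ) : ℤ) : ℝ) := by
      rw [hQ]
      have := Polynomial.eval_map_apply (f := Int.castRingHom ℝ) (p := P) (n : ℤ)
      simpa using this
    simp only [Function.comp, e] at hn
    exact_mod_cast hn
  · push Not at hd
    rw [Polynomial.eq_C_of_degree_le_zero hd, Polynomial.leadingCoeff_C] at h
    rw [Polynomial.eq_C_of_degree_le_zero hd]
    exact Eventually.of_forall fun n => by rw [Polynomial.eval_C]; exact h

lemma poly_eventually_sign (P : Polynomial ℤ) :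
    ∀ᶠ n : ℕ in atTop, (0 < P.leadingCoeff ↔ 0 < P.eval (n : ℤ)) ∧
      (P.leadingCoeff < 0 ↔ P.eval (n : ℤ) < 0) ∧ (P.leadingCoeff = 0 ↔ P.eval (n : ℤ) = 0) := by
  rcases lt_trichotomy P.leadingCoeff 0 with h | h | h
  · have := poly_eventually_pos (-P) (by simpa using h)
    filter_upwards [this] with n hn
    simp at hn
    refine ⟨⟨fun _ => by omega, fun _ => by omega⟩, ⟨fun _ => by omega, fun _ => by omega⟩,
      ⟨fun _ => by omega, fun _ => by omega⟩⟩
  · have : P = 0 := Polynomial.leadingCoeff_eq_zero.1 h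
    subst this
    simp
  · filter_upwards [poly_eventually_pos P h] with n hn
    refine ⟨⟨fun _ => by omega, fun _ => by omega⟩, ⟨fun _ => by omega, fun _ => by omega⟩,
      ⟨fun _ => by omega, fun _ => by omega⟩⟩

section FM
variable {Y : Type}

lemma fourier_motzkin (ν : Y → ℕ) (W : (Y → ℤ) → Prop)
    (hadd : ∀ f g, W f → W g → W (fun y => f y + g y))
    (hmul : ∀ (P : Polynomial ℤ) f, W f → W (fun y => P.eval (ν y : ℤ) * f y)) (k : ℕ) :
    ∀ cs : Set ((Fin k → Polynomial ℤ) × (Y → ℤ)), cs.Finite → (∀ c ∈ cs, W c.2) →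
      ∃ ws : Set (Y → ℤ), ws.Finite ∧ (∀ w ∈ ws, W w) ∧ ∀ᶠ n : ℕ in atTop, ∀ y, ν y = n →
        ((∃ t : Fin k → ℝ, ∀ c ∈ cs, 0 ≤ ∑ i, (((c.1 i).eval (n : ℤ) : ℤ) : ℝ) * t i + (c.2 y : ℝ))
          ↔ ∀ w ∈ ws, 0 ≤ w y) := by
  induction k with
  | zero =>
    intro cs hfin hW
    refine ⟨Set.image Prod.snd cs, hfin.image _, ?_, Eventually.of_forall fun n y _ => ?_⟩
    · rintro _ ⟨c, hc, rfl⟩; exact hW c hc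
    · constructor
      · rintro ⟨t, ht⟩ _ ⟨c, hc, rfl⟩
        have := ht c hc
        simpa using this
      · intro h
        refine ⟨fun i => 0, fun c hc => ?_⟩
        have := h _ ⟨c, hc, rfl⟩
        simpa using this
  | succ k ih =>
    intro cs hfin hW
    let tl : ((Fin (k + 1) → Polynomial ℤ) × (Y → ℤ)) → ((Fin k → Polynomial ℤ) × (Y → ℤ)) :=
      fun c => (fun i => c.1 i.succ, c.2)
    let cmb : ((Fin (k + 1) → Polynomial ℤ) × (Y → ℤ)) →
        ((Fin (k + 1) → Polynomial ℤ) × (Y → ℤ)) → ((Fin k → Polynomial ℤ) × (Y → ℤ)) :=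
      fun p q => (fun i => -(q.1 0) * p.1 i.succ + p.1 0 * q.1 i.succ,
        fun y => (-(q.1 0)).eval (ν y : ℤ) * p.2 y + (p.1 0).eval (ν y : ℤ) * q.2 y)
    let zs := {c ∈ cs | (c.1 0).leadingCoeff = 0}
    let ps := {c ∈ cs | 0 < (c.1 0).leadingCoeff}
    let ns := {c ∈ cs | (c.1 0).leadingCoeff < 0}
    have fz : zs.Finite := hfin.subset fun c hc => hc.1
    have fp : ps.Finite := hfin.subset fun c hc => hc.1
    have fn : ns.Finite := hfin.subset fun c hc => hc.1
    obtain ⟨ws, hwf, hwW, hws⟩ := ih (Set.image tl zs ∪ Set.image2 cmb ps ns)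
      ((fz.image _).union (fp.image2 _ fn)) (by
        rintro c (⟨c, hc, rfl⟩ | ⟨p, hp, q, hq, rfl⟩)
        · exact hW c hc.1
        · exact hadd _ _ (hmul _ _ (hW p hp.1)) (hmul _ _ (hW q hq.1)))
    refine ⟨ws, hwf, hwW, ?_⟩
    have hsign := (eventually_all_finite hfin).2 fun c _ => poly_eventually_sign (c.1 0)
    filter_upwards [hws, hsign] with n hn hs y hy
    rw [← hn y hy, Fin.exists_fin_succ_pi, exists_comm]
    refine exists_congr fun t => ?_
    have e1 : (∃ a : ℝ, ∀ c ∈ cs, 0 ≤ ∑ i, (((c.1 i).eval (n : ℤ) : ℤ) : ℝ) *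
        (Fin.cons a t : Fin (k + 1) → ℝ) i + (c.2 y : ℝ)) ↔
        ∃ a : ℝ, ∀ c ∈ cs, 0 ≤ (((c.1 0).eval (n : ℤ) : ℤ) : ℝ) * a +
          (∑ i : Fin k, (((c.1 i.succ).eval (n : ℤ) : ℤ) : ℝ) * t i + (c.2 y : ℝ)) := by
      refine exists_congr fun a => forall₂_congr fun c _ => ?_
      rw [Fin.sum_univ_succ]
      simp [add_assoc]
    rw [e1, fm_one cs hfin]
    have e2 : ∀ p q : (Fin (k + 1) → Polynomial ℤ) × (Y → ℤ),
        -(((q.1 0).eval (n : ℤ) : ℤ) : ℝ) *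
          (∑ i : Fin k, (((p.1 i.succ).eval (n : ℤ) : ℤ) : ℝ) * t i + (p.2 y : ℝ))
        + (((p.1 0).eval (n : ℤ) : ℤ) : ℝ) *
          (∑ i : Fin k, (((q.1 i.succ).eval (n : ℤ) : ℤ) : ℝ) * t i + (q.2 y : ℝ))
        = ∑ i : Fin k, ((((cmb p q).1 i).eval (n : ℤ) : ℤ) : ℝ) * t i + ((cmb p q).2 y : ℝ) := by
      intro p q
      simp only [cmb, hy, Polynomial.eval_add, Polynomial.eval_mul, Polynomial.eval_neg,
        Int.cast_add, Int.cast_mul, Int.cast_neg, add_mul, Finset.sum_add_distrib, mul_add,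
        Finset.mul_sum, mul_assoc]
      ring
    simp only [e2]
    constructor
    · rintro ⟨hz, hpq⟩ c (⟨c, hc, rfl⟩ | ⟨p, hp, q, hq, rfl⟩)
      · refine hz c hc.1 ?_
        exact_mod_cast (hs c hc.1).2.2.1 hc.2
      · refine hpq p hp.1 q hq.1 ?_ ?_
        · exact_mod_cast (hs p hp.1).1.1 hp.2
        · exact_mod_cast (hs q hq.1).2.1.1 hq.2
    · intro h
      refine ⟨fun c hc h0 => h _ (Or.inl ⟨c, ⟨hc, ?_⟩, rfl⟩),
        fun p hp q hq h1 h2 => h _ (Or.inr ⟨p, ⟨hp, ?_⟩, q, ⟨hq, ?_⟩, rfl⟩)⟩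
      · exact (hs c hc).2.2.2 (by exact_mod_cast h0)
      · exact (hs p hp).1.2 (by exact_mod_cast h1)
      · exact (hs q hq).2.1.2 (by exact_mod_cast h2)

/-! ### Polynomials in the parameter with linear forms as coefficients -/

inductive W (ν : Y → ℕ) (L : AddSubgroup (Y → ℤ)) : (Y → ℤ) → Prop
  | base (e : Y → ℤ) (he : e ∈ L) : W ν L e
  | step (e w : Y → ℤ) (he : e ∈ L) (hw : W ν L w) : W ν L (fun y => e y + ν y * w y)

variable {ν : Y → ℕ} {L : AddSubgroup (Y → ℤ)}

lemma W.congr {f g : Y → ℤ} (hf : W ν L f) (h : ∀ y, g y = f y) : W ν L g := by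
  rwa [show g = f from funext h]

lemma W.add {f g : Y → ℤ} (hf : W ν L f) (hg : W ν L g) : W ν L (fun y => f y + g y) := by
  induction hf generalizing g with
  | base e he =>
    cases hg with
    | base e' he' => exact W.base _ (L.add_mem he he')
    | step e' w he' hw =>
      exact W.congr (W.step _ w (L.add_mem he he') hw) fun y => by simp [add_assoc]
  | step e w he hw ih =>
    cases hg with
    | base e' he' =>
      exact W.congr (W.step _ w (L.add_mem he he') hw) fun y => by simp; ring
    | step e' w' he' hw' =>
      exact W.congr (W.step _ _ (L.add_mem he he') (ih hw')) fun y => by simp; ring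

lemma W.smul {f : Y → ℤ} (hf : W ν L f) (c : ℤ) : W ν L (fun y => c * f y) := by
  induction hf with
  | base e he => exact W.congr (W.base _ (L.zsmul_mem he c)) fun y => by simp
  | step e w he hw ih => 
    exact W.congr (W.step _ _ (L.zsmul_mem he c) ih) fun y => by simp; ring

lemma W.mulν {f : Y → ℤ} (hf : W ν L f) : W ν L (fun y => ν y * f y) :=
  W.congr (W.step 0 f L.zero_mem hf) fun y => by simp

lemma W.mul_poly {f : Y → ℤ} (hf : W ν L f) (P : Polynomial ℤ) :
    W ν L (fun y => P.eval (ν y : ℤ) * f y) := by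
  induction P using Polynomial.induction_on' with
  | add p q hp hq => exact W.congr (hp.add hq) fun y => by simp [add_mul]
  | monomial k a =>
    induction k with
    | zero => exact W.congr (hf.smul a) fun y => by simp
    | succ k ih => exact W.congr ih.mulν fun y => by simp; ring

lemma W.ind_mem (hc : ∀ c : ℤ, (fun _ => c) ∈ L) (hν : (fun y => (ν y : ℤ)) ∈ L) (Dom : Set Y)
    (hpos : ∀ y ∈ Dom, 0 < ν y) (hb : ∀ e ∈ L, ∃ K : ℕ, ∀ y ∈ Dom, |e y| ≤ K * ν y)
    {w : Y → ℤ} (hw : W ν L w) :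
    ∀ c : ℤ, ∃ f ∈ PQ L, ∀ y ∈ Dom, ind (0 ≤ w y + c) = f y := by
  induction hw with
  | base e he =>
    intro c
    exact ⟨_, PQ.ge (L.add_mem he (hc c)), fun y _ => rfl⟩
  | step e w he hw ih =>
    intro c
    have he' : (fun y => e y + c) ∈ L := L.add_mem he (hc c)
    obtain ⟨K, hK⟩ := hb _ he'
    choose f hf hfe using ih
    have hνq : ∀ q : ℤ, (fun y => q * ν y) ∈ L := fun q => by
      convert L.zsmul_mem hν q using 1
      ext y; simp
    refine ⟨fun y => ∑ q ∈ Finset.Icc (-(K : ℤ)) K, ind (0 ≤ (e y + c) - q * ν y) *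
      ind (0 ≤ (q + 1) * ν y - (e y + c) - 1) * f q y, ?_, fun y hy => ?_⟩
    · refine PQ.sum _ fun q _ => PQ.mul (PQ.mul (PQ.ge (L.sub_mem he' (hνq q))) 
        (PQ.ge (L.sub_mem (L.sub_mem (hνq (q + 1)) he') (hc 1)))) (hf q)
    · have hp : (0 : ℤ) < ν y := by exact_mod_cast hpos y hy
      have hk := hK y hy
      rw [abs_le] at hk
      beta_reduce
      set z := e y + c with hz
      have e1 := Int.mul_ediv_add_emod z (ν y)
      have e2 := Int.emod_nonneg z hp.ne'
      have e3 := Int.emod_lt_of_pos z hp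
      rw [Finset.sum_eq_single (z / ν y)]
      · rw [ind_pos (p := 0 ≤ z - z / ν y * ν y) (by linarith),
          ind_pos (p := 0 ≤ (z / ν y + 1) * ν y - z - 1) (by linarith), one_mul, one_mul,
          ← hfe _ y hy]
        apply ind_congr
        have : e y + ν y * w y + c = z % ν y + ν y * (w y + z / ν y) := by linarith
        rw [this]
        constructor
        · intro h
          by_contra hcon
          push Not at hcon
          nlinarith
        · intro h
          have := mul_nonneg hp.le h
          linarith
      · intro q _ hne
        by_cases h1 : 0 ≤ z - q * ν y
        · rw [ind_neg (p := 0 ≤ (q + 1) * ν y - z - 1), mul_zero, zero_mul]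
          intro h2
          apply hne
          symm
          rw [Int.ediv_eq_iff_of_pos hp]
          constructor <;> linarith
        · rw [ind_neg h1, zero_mul, zero_mul]
      · intro h
        exfalso; apply h
        rw [Finset.mem_Icc]
        constructor
        · rw [Int.le_ediv_iff_mul_le hp]; linarith
        · by_contra hcon
          push Not at hcon
          nlinarith
end FM

/-! ### Eventual quasi-polynomials -/

def IsEQP (f : ℕ → ℚ) : Prop := ∃ h, IsQP h ∧ ∀ᶠ n in atTop, f n = h n

/-- linear forms in `(n, x)` -/
def Lr (r : ℕ) : AddSubgroup (ℕ × (Fin r → ℕ) → ℤ) where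
  carrier := {l | ∃ a b : ℤ, ∃ c : Fin r → ℤ, ∀ y, l y = a * y.1 + b + ∑ j, c j * y.2 j}
  zero_mem' := ⟨0, 0, 0, fun y => by simp⟩
  add_mem' := by
    rintro f g ⟨a, b, c, h⟩ ⟨a', b', c', h'⟩
    refine ⟨a + a', b + b', c + c', fun y => ?_⟩
    simp only [Pi.add_apply, h, h', add_mul, Finset.sum_add_distrib]
    ring
  neg_mem' := by
    rintro f ⟨a, b, c, h⟩
    refine ⟨-a, -b, -c, fun y => ?_⟩
    simp only [Pi.neg_apply, h, neg_mul, Finset.sum_neg_distrib]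
    ring

lemma Lr.const (r : ℕ) (c : ℤ) : (fun _ => c) ∈ Lr r := ⟨0, c, 0, fun y => by simp⟩
lemma Lr.param (r : ℕ) (a : ℤ) : (fun y => a * (y.1 : ℤ)) ∈ Lr r := ⟨a, 0, 0, fun y => by simp⟩
lemma Lr.coord (r : ℕ) (j : Fin r) : (fun y => (y.2 j : ℤ)) ∈ Lr r :=
  ⟨0, 0, Pi.single j 1, fun y => by simp [Pi.single_apply]⟩

lemma IsEQP.of_PQ {f : ℕ × (Fin 0 → ℕ) → ℚ} (hf : f ∈ PQ (Lr 0)) (d : Fin 0 → ℕ) :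
    IsEQP (fun n => f (n, d)) := by
  induction hf using Algebra.adjoin_induction with
  | algebraMap c => exact ⟨_, IsQP.const c, Eventually.of_forall fun n => rfl⟩
  | add f g _ _ hf hg =>
    obtain ⟨f', hf', ef⟩ := hf
    obtain ⟨g', hg', eg⟩ := hg
    exact ⟨_, hf'.add hg', by filter_upwards [ef, eg] with n h1 h2; simp [h1, h2]⟩
  | mul f g _ _ hf hg =>
    obtain ⟨f', hf', ef⟩ := hf
    obtain ⟨g', hg', eg⟩ := hg
    exact ⟨_, hf'.mul hg', by filter_upwards [ef, eg] with n h1 h2; simp [h1, h2]⟩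
  | mem f hf =>
    rcases hf with (⟨l, ⟨a, b, c, h⟩, rfl⟩ | ⟨l, ⟨a, b, c, h⟩, rfl⟩) | ⟨m, hm, l, ⟨a, b, c, h⟩, rfl⟩
    · refine ⟨_, IsQP.poly (Polynomial.C (a : ℚ) * Polynomial.X + Polynomial.C (b : ℚ)),
        Eventually.of_forall fun n => ?_⟩
      simp [h]
    · have hs := poly_eventually_sign (Polynomial.C a * Polynomial.X + Polynomial.C b)
      set P : Polynomial ℤ := Polynomial.C a * Polynomial.X + Polynomial.C b
      refine ⟨_, IsQP.const (ind (0 ≤ P.leadingCoeff)), ?_⟩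
      filter_upwards [hs] with n hn
      apply ind_congr
      rw [h]
      have : P.eval (n : ℤ) = a * n + b := by simp [P]
      rw [this] at hn
      simp only [Finset.univ_eq_empty, Finset.sum_empty, add_zero]
      rw [← not_lt, ← not_lt, hn.2.1]
    · refine ⟨_, IsQP.mod m hm (fun s => (m : ℤ) ∣ a * s + b), Eventually.of_forall fun n => ?_⟩
      apply ind_congr
      rw [h]
      simp only [Finset.univ_eq_empty, Finset.sum_empty, add_zero]
      have e1 : (n : ℤ) = m * (n / m : ℕ) + (n % m : ℕ) := by
        exact_mod_cast (Nat.div_add_mod n m).symm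
      have : a * (n : ℤ) + b = a * (n % m : ℕ) + b + m * (a * (n / m : ℕ)) := by
        conv_lhs => rw [e1]
        ring
      rw [this]
      exact dvd_add_left (Dvd.intro _ rfl)

lemma sum_piFinset_succ (r m : ℕ) (F : (Fin (r + 1) → ℕ) → ℚ) :
    ∑ x ∈ Fintype.piFinset (fun _ : Fin (r + 1) => Finset.range m), F x =
      ∑ x ∈ Fintype.piFinset (fun _ : Fin r => Finset.range m), ∑ z ∈ Finset.range m,
        F (Fin.cons z x) := by
  rw [← Finset.sum_product']
  refine Finset.sum_nbij' (fun x => (Fin.tail x, x 0)) (fun p => Fin.cons p.2 p.1) ?_ ?_ ?_ ?_ ?_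
  · intro x hx
    simp only [Fintype.mem_piFinset, Finset.mem_range, Finset.mem_product] at hx ⊢
    exact ⟨fun j => hx _, hx 0⟩
  · rintro ⟨x, z⟩ hx
    simp only [Fintype.mem_piFinset, Finset.mem_range, Finset.mem_product] at hx ⊢
    intro j
    refine Fin.cases ?_ (fun j => ?_) j
    · simpa using hx.2
    · simpa using hx.1 j
  · intro x _; simp
  · rintro ⟨x, z⟩ _; simp
  · intro x _; simp

lemma IsEQP.sum_PQ (B r : ℕ) : ∀ {f : ℕ × (Fin r → ℕ) → ℚ}, f ∈ PQ (Lr r) →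
    IsEQP (fun n => ∑ x ∈ Fintype.piFinset (fun _ : Fin r => Finset.range (B * n)), f (n, x)) := by
  induction r with
  | zero =>
    intro f hf
    obtain ⟨h, hh, e⟩ := IsEQP.of_PQ hf (fun i => i.elim0)
    refine ⟨h, hh, ?_⟩
    filter_upwards [e] with n hn
    rw [← hn, Fintype.piFinset_of_isEmpty, Fintype.sum_unique]
    congr
  | succ r ih =>
    intro f hf
    have := PQ.sum_var (L := Lr r) (L' := Lr (r + 1)) (fun y z => (y.1, Fin.cons z y.2)) (by
      rintro l' ⟨a, b, c, h⟩
      refine ⟨fun y => a * y.1 + b + ∑ j : Fin r, c j.succ * y.2 j, ⟨a, b, _, fun y => rfl⟩, c 0,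
        fun y x => ?_⟩
      rw [h, Fin.sum_univ_succ]
      simp
      ring) (Lr.const r) (N := fun y => B * y.1) (by simpa using Lr.param r B) hf
    obtain ⟨h, hh, e⟩ := ih this
    refine ⟨h, hh, ?_⟩
    filter_upwards [e] with n hn
    rw [← hn, sum_piFinset_succ]

/-! ### The main count -/

lemma mem_hull_iff {k r : ℕ} (v : Fin k → Fin r → ℝ) (p : Fin r → ℝ) :
    p ∈ convexHull ℝ (Set.range v) ↔
      ∃ t : Fin k → ℝ, (∀ i, 0 ≤ t i) ∧ ∑ i, t i = 1 ∧ ∀ j, ∑ i, v i j * t i = p j := by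
  have h : convexHull ℝ (Set.range v) = Set.image (Fintype.linearCombination ℝ v) (stdSimplex ℝ (Fin k)) := by
    rw [← convexHull_rangle_single_eq_stdSimplex, LinearMap.image_convexHull, ← Set.range_comp]
    congr 2
    ext i : 1
    simp [Fintype.linearCombination_apply_single]
  rw [h]
  constructor
  · rintro ⟨t, ⟨h0, h1⟩, rfl⟩
    refine ⟨t, h0, h1, fun j => ?_⟩
    simp [Fintype.linearCombination_apply, mul_comm]
  · rintro ⟨t, h0, h1, h2⟩
    refine ⟨t, ⟨h0, h1⟩, ?_⟩
    ext j
    rw [← h2 j]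
    simp [Fintype.linearCombination_apply, mul_comm]

/-- the hull of the points `a i * n + b i` -/
def Hull {r k : ℕ} (a b : Fin k → Fin r → ℤ) (n : ℕ) : Set (Fin r → ℝ) :=
  convexHull ℝ (Set.range fun i => fun j => ((a i j * n + b i j : ℤ) : ℝ))

lemma hull_bound {r k : ℕ} (a b : Fin k → Fin r → ℤ) : ∃ K : ℕ, ∀ n : ℕ, 0 < n →
    ∀ p : Fin r → ℤ, (fun j => (p j : ℝ)) ∈ Hull a b n → ∀ j, |p j| ≤ K * n := by
  set K : ℕ := ∑ i, ∑ j, ((a i j).natAbs + (b i j).natAbs) with hK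
  refine ⟨K, fun n hn p hp j => ?_⟩
  have hab : ∀ i j, |a i j * n + b i j| ≤ (K : ℤ) * n := by
    intro i j
    have h1 : (a i j).natAbs + (b i j).natAbs ≤ K := by
      rw [hK]
      refine le_trans ?_ (Finset.single_le_sum (f := fun i => ∑ j, ((a i j).natAbs + (b i j).natAbs))
        (fun _ _ => Nat.zero_le _) (Finset.mem_univ i))
      exact Finset.single_le_sum (f := fun j => ((a i j).natAbs + (b i j).natAbs))
        (fun _ _ => Nat.zero_le _) (Finset.mem_univ j)
    have h2 : |a i j| + |b i j| ≤ (K : ℤ) := by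
      have : (((a i j).natAbs + (b i j).natAbs : ℕ) : ℤ) ≤ K := by exact_mod_cast h1
      simpa using this
    have hn' : (1 : ℤ) ≤ n := by exact_mod_cast hn
    calc |a i j * n + b i j| ≤ |a i j * n| + |b i j| := abs_add_le _ _
      _ = |a i j| * n + |b i j| := by rw [abs_mul, Nat.abs_cast]
      _ ≤ |a i j| * n + |b i j| * n := by nlinarith [abs_nonneg (b i j)]
      _ ≤ K * n := by nlinarith
  have hsub : Hull a b n ⊆ Set.Icc (fun _ => -((K : ℝ) * n)) (fun _ => (K : ℝ) * n) := by
    refine convexHull_min ?_ (convex_Icc _ _)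
    rintro _ ⟨i, rfl⟩
    constructor <;> intro j
    · have := (abs_le.1 (hab i j)).1
      beta_reduce
      exact_mod_cast this
    · have := (abs_le.1 (hab i j)).2
      beta_reduce
      exact_mod_cast this
  obtain ⟨h1, h2⟩ := hsub hp
  rw [abs_le]
  have h1 := h1 j
  have h2 := h2 j
  beta_reduce at h1 h2
  constructor
  · exact_mod_cast h1
  · exact_mod_cast h2

lemma hull_ind {r k : ℕ} (a b : Fin k → Fin r → ℤ) (K B : ℕ) :
    ∃ f ∈ PQ (Lr r), ∀ᶠ n : ℕ in atTop, ∀ x : Fin r → ℕ, (∀ j, x j < B * n) →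
      ind ((fun j => (((x j : ℤ) - K * n : ℤ) : ℝ)) ∈ Hull a b n) = f (n, x) := by
  let ν : ℕ × (Fin r → ℕ) → ℕ := fun y => y.1
  have hpL : ∀ j : Fin r, (fun y : ℕ × (Fin r → ℕ) => (y.2 j : ℤ) - K * y.1) ∈ Lr r := fun j =>
    (Lr r).sub_mem (Lr.coord r j) (Lr.param r K)
  let P : Fin k → Fin r → Polynomial ℤ := fun i j =>
    Polynomial.C (a i j) * Polynomial.X + Polynomial.C (b i j)
  let c1 : Fin k → (Fin k → Polynomial ℤ) × (ℕ × (Fin r → ℕ) → ℤ) := fun i =>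
    (Pi.single i 1, fun _ => 0)
  let c2 : (Fin k → Polynomial ℤ) × (ℕ × (Fin r → ℕ) → ℤ) := (fun _ => 1, fun _ => -1)
  let c3 : (Fin k → Polynomial ℤ) × (ℕ × (Fin r → ℕ) → ℤ) := (fun _ => -1, fun _ => 1)
  let c4 : Fin r → (Fin k → Polynomial ℤ) × (ℕ × (Fin r → ℕ) → ℤ) := fun j =>
    (fun i => P i j, fun y => -((y.2 j : ℤ) - K * y.1))
  let c5 : Fin r → (Fin k → Polynomial ℤ) × (ℕ × (Fin r → ℕ) → ℤ) := fun j =>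
    (fun i => -P i j, fun y => (y.2 j : ℤ) - K * y.1)
  let cs := Set.range c1 ∪ {c2, c3} ∪ (Set.range c4 ∪ Set.range c5)
  obtain ⟨ws, hfin, hwW, hws⟩ := fourier_motzkin ν (W ν (Lr r)) (fun f g => W.add)
    (fun P f hf => W.mul_poly hf P) k cs
    (((Set.finite_range _).union (by simp)).union
      ((Set.finite_range _).union (Set.finite_range _))) (by
      rintro c ((⟨i, rfl⟩ | (rfl | rfl)) | (⟨j, rfl⟩ | ⟨j, rfl⟩))
      · exact W.base _ (Lr.const r 0)
      · exact W.base _ (Lr.const r _)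
      · exact W.base _ (Lr.const r _)
      · exact W.base _ ((Lr r).neg_mem (hpL j))
      · exact W.base _ (hpL j))
  let Dom : Set (ℕ × (Fin r → ℕ)) := {y | 0 < y.1 ∧ ∀ j, y.2 j < B * y.1}
  have hind : ∀ w ∈ ws, ∃ f ∈ PQ (Lr r), ∀ y ∈ Dom, ind (0 ≤ w y) = f y := by
    intro w hw
    have := W.ind_mem (ν := ν) (L := Lr r) (Lr.const r) (by simpa using Lr.param r 1) Dom
      (fun y hy => hy.1) (by
        rintro e ⟨a, b, c, h⟩
        refine ⟨a.natAbs + b.natAbs + ∑ j, (c j).natAbs * B, fun y hy => ?_⟩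
        have hn' : (1 : ℤ) ≤ y.1 := by exact_mod_cast hy.1
        have hsum : |∑ j, c j * (y.2 j : ℤ)| ≤ (∑ j, |c j| * B) * y.1 := by
          refine (Finset.abs_sum_le_sum_abs _ _).trans ?_
          rw [Finset.sum_mul]
          refine Finset.sum_le_sum fun j _ => ?_
          rw [abs_mul, Nat.abs_cast, mul_assoc]
          refine mul_le_mul_of_nonneg_left ?_ (abs_nonneg _)
          exact_mod_cast (hy.2 j).le
        rw [h]
        push_cast
        simp only [ν]
        calc |a * (y.1 : ℤ) + b + ∑ j, c j * (y.2 j : ℤ)|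
            ≤ |a * (y.1 : ℤ)| + |b| + |∑ j, c j * (y.2 j : ℤ)| := abs_add_three _ _ _
          _ ≤ |a| * y.1 + |b| * y.1 + (∑ j, |c j| * B) * y.1 := by
            rw [abs_mul, Nat.abs_cast]
            nlinarith [abs_nonneg b]
          _ = _ := by ring) (hwW w hw) 0
    simpa using this
  choose! f hf hfe using hind
  refine ⟨fun y => ∏ w ∈ hfin.toFinset, f w y, PQ.prod _ fun w hw => hf w (hfin.mem_toFinset.1 hw), ?_⟩
  filter_upwards [hws, eventually_gt_atTop 0] with n hn hn0 x hx
  have hD : ((n, x) : ℕ × (Fin r → ℕ)) ∈ Dom := ⟨hn0, hx⟩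
  have e1 : (fun j => (((x j : ℤ) - K * n : ℤ) : ℝ)) ∈ Hull a b n ↔ ∀ w ∈ ws, 0 ≤ w (n, x) := by
    rw [← hn (n, x) rfl, Hull, mem_hull_iff]
    refine exists_congr fun t => ?_
    have hP : ∀ i j, (((P i j).eval (n : ℤ) : ℤ) : ℝ) = ((a i j * n + b i j : ℤ) : ℝ) := by
      intro i j; simp [P]
    constructor
    · rintro ⟨h0, h1, h2⟩ c ((⟨i, rfl⟩ | (rfl | rfl)) | (⟨j, rfl⟩ | ⟨j, rfl⟩))
      · have : ∀ i', (((Pi.single i (1 : Polynomial ℤ) : Fin k → Polynomial ℤ) i').eval (n : ℤ) : ℤ) =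
            if i' = i then 1 else 0 := by
          intro i'; rw [Pi.single_apply]; split_ifs <;> simp
        simp only [c1, this]
        simpa using h0 i
      · simp [c2, h1]
      · simp [c3, h1]
      · simp only [c4, hP, h2]
        push_cast
        linarith
      · simp only [c5, Polynomial.eval_neg, Int.cast_neg, hP, neg_mul, Finset.sum_neg_distrib, h2]
        push_cast
        linarith
    · intro h
      refine ⟨fun i => ?_, ?_, fun j => ?_⟩
      · have := h _ (Or.inl (Or.inl ⟨i, rfl⟩))
        have e : ∀ i', (((Pi.single i (1 : Polynomial ℤ) : Fin k → Polynomial ℤ) i').eval (n : ℤ) : ℤ) =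
            if i' = i then 1 else 0 := by
          intro i'; rw [Pi.single_apply]; split_ifs <;> simp
        simp only [c1, e] at this
        simpa using this
      · have h1 := h _ (Or.inl (Or.inr (Or.inl rfl)))
        have h2 := h _ (Or.inl (Or.inr (Or.inr rfl)))
        simp [c2] at h1
        simp [c3] at h2
        linarith
      · have h1 := h _ (Or.inr (Or.inl ⟨j, rfl⟩))
        have h2 := h _ (Or.inr (Or.inr ⟨j, rfl⟩))
        simp only [c4, hP, Int.cast_neg] at h1
        simp only [c5, Polynomial.eval_neg, Int.cast_neg, hP, neg_mul, Finset.sum_neg_distrib] at h2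
        linarith
  by_cases hin : (fun j => (((x j : ℤ) - K * n : ℤ) : ℝ)) ∈ Hull a b n
  · rw [ind_pos hin]
    rw [e1] at hin
    symm
    refine Finset.prod_eq_one fun w hw => ?_
    rw [hfin.mem_toFinset] at hw
    rw [← hfe w hw _ hD, ind_pos (hin w hw)]
  · rw [ind_neg hin]
    rw [e1] at hin
    push Not at hin
    obtain ⟨w, hw, hlt⟩ := hin
    symm
    refine Finset.prod_eq_zero (hfin.mem_toFinset.2 hw) ?_
    rw [← hfe w hw _ hD, ind_neg (not_le.2 hlt)]

lemma count_eqp {r k : ℕ} (a b : Fin k → Fin r → ℤ) :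
    IsEQP (fun n => (Nat.card {p : Fin r → ℤ | (fun j => (p j : ℝ)) ∈ Hull a b n} : ℚ)) := by
  classical
  obtain ⟨K, hK⟩ := hull_bound a b
  obtain ⟨f, hf, hfe⟩ := hull_ind a b K (2 * K + 1)
  obtain ⟨h, hh, he⟩ := IsEQP.sum_PQ (2 * K + 1) r hf
  refine ⟨h, hh, ?_⟩
  filter_upwards [he, hfe, eventually_gt_atTop 0] with n h1 h2 hn0
  rw [← h1]
  set T := Fintype.piFinset (fun _ : Fin r => Finset.range ((2 * K + 1) * n)) with hT
  have hmem : ∀ x, x ∈ T ↔ ∀ j, x j < (2 * K + 1) * n := by simp [hT, Fintype.mem_piFinset]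
  let φ : (Fin r → ℕ) → (Fin r → ℤ) := fun x j => (x j : ℤ) - K * n
  have hφ : Function.Injective φ := by
    intro x x' hxx
    ext j
    have := congrFun hxx j
    simp only [φ] at this
    omega
  have hS : {p : Fin r → ℤ | (fun j => (p j : ℝ)) ∈ Hull a b n} =
      ((T.filter fun x => (fun j => ((φ x j : ℤ) : ℝ)) ∈ Hull a b n).image φ : Finset (Fin r → ℤ)) := by
    ext p
    simp only [Set.mem_ofPred_eq, Finset.coe_image, Finset.coe_filter, Set.mem_image]
    constructor
    · intro hp
      have hb := hK n hn0 p hp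
      have hpφ : φ (fun j => (p j + K * n).toNat) = p := by
        ext j
        have := abs_le.1 (hb j)
        simp only [φ]
        rw [Int.toNat_of_nonneg (by linarith)]
        ring
      refine ⟨fun j => (p j + K * n).toNat, ⟨?_, ?_⟩, hpφ⟩
      · rw [hmem]
        intro j
        have := abs_le.1 (hb j)
        have hn' : (1 : ℤ) ≤ n := by exact_mod_cast hn0
        rw [Int.toNat_lt (by linarith)]
        push_cast
        linarith
      · rw [hpφ]; exact hp
    · rintro ⟨x, ⟨_, hx⟩, rfl⟩
      exact hx
  rw [hS, Nat.card_coe_set_eq, Set.ncard_coe_finset, Finset.card_image_of_injective _ hφ,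
    ← Finset.sum_boole]
  refine Finset.sum_congr rfl fun x hx => ?_
  rw [← h2 x ((hmem x).1 hx)]
  simp only [ind, φ]

end QPCount

/-- Chen–Li–Sam / generalized Ehrhart: let `N_n ⊆ ℝ^r` be the convex hull
of lattice points `v_i(n) ∈ ℤ^r` whose coordinates are quasi-linear in `n` (linear on
each residue class mod some `M`).  Then the lattice-point count `|N_n ∩ ℤ^r|` is a
quasi-polynomial in `n` for all sufficiently large `n`. -/
theorem lattice_point_count_quasi_polynomial
    (r k : ℕ) (v : Fin k → ℕ → Fin r → ℤ)
    (M : ℕ) (hM : 0 < M)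
    (hql : ∀ (i : Fin k) (j : Fin r), ∀ ρ < M, ∃ a b : ℤ,
      ∀ n : ℕ, v i (n * M + ρ) j = a * n + b)
    (count : ℕ → ℕ)
    (hcount : ∀ n, count n =
      Nat.card {p : Fin r → ℤ |
        (fun j => (p j : ℝ)) ∈
          convexHull ℝ (Set.range fun i => fun j => (v i n j : ℝ))}) :
    ∃ M' : ℕ, 0 < M' ∧ ∃ N₀ : ℕ, ∀ ρ < M', ∃ P : Polynomial ℚ,
      ∀ n : ℕ, N₀ ≤ n → (count (n * M' + ρ) : ℚ) = P.eval (n : ℚ) := by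
  have key : ∀ ρ : ℕ, ∃ D : ℕ, 0 < D ∧ ∃ P : ℕ → Polynomial ℚ, ∃ N : ℕ, ρ < M →
      ∀ n, N ≤ n → (count (n * M + ρ) : ℚ) = (P (n % D)).eval (n : ℚ) := by
    intro ρ
    by_cases hρ : ρ < M
    · choose a b hab using fun i j => hql i j ρ hρ
      obtain ⟨h, ⟨D, hD, P, hP⟩, he⟩ := QPCount.count_eqp a b
      obtain ⟨N, hN⟩ := Filter.eventually_atTop.1 he
      refine ⟨D, hD, P, N, fun _ n hn => ?_⟩
      rw [← hP, ← hN n hn, hcount]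
      simp only [QPCount.Hull, hab]
    · exact ⟨1, one_pos, fun _ => 0, 0, fun h => absurd h hρ⟩
  choose D hD P N hN using key
  set E := ∏ ρ ∈ Finset.range M, D ρ with hE
  have hE0 : 0 < E := Finset.prod_pos fun ρ _ => hD ρ
  refine ⟨E * M, Nat.mul_pos hE0 hM, ∑ ρ ∈ Finset.range M, N ρ, fun σ hσ => ?_⟩
  set ρ := σ % M with hρ
  have hρM : ρ < M := Nat.mod_lt _ hM
  have hdvd : D ρ ∣ E := Finset.dvd_prod_of_mem _ (Finset.mem_range.2 hρM)
  refine ⟨(P ρ ((σ / M) % D ρ)).comp (Polynomial.C (E : ℚ) * Polynomial.X +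
    Polynomial.C ((σ / M : ℕ) : ℚ)), fun n hn => ?_⟩
  have e1 : n * (E * M) + σ = (n * E + σ / M) * M + ρ := by
    have := Nat.div_add_mod σ M
    calc n * (E * M) + σ = n * (E * M) + (M * (σ / M) + σ % M) := by rw [this]
      _ = _ := by rw [hρ]; ring
  have hNn : N ρ ≤ n * E + σ / M := by
    have h1 : N ρ ≤ ∑ ρ ∈ Finset.range M, N ρ :=
      Finset.single_le_sum (f := N) (fun _ _ => Nat.zero_le _) (Finset.mem_range.2 hρM)
    have h2 : n ≤ n * E := Nat.le_mul_of_pos_right n hE0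
    exact h1.trans (hn.trans (h2.trans (Nat.le_add_right _ _)))
  rw [e1, hN ρ hρM _ hNn]
  have e2 : (n * E + σ / M) % D ρ = (σ / M) % D ρ := by
    obtain ⟨q, hq⟩ := hdvd
    rw [hq, show n * (D ρ * q) = D ρ * (n * q) by ring, Nat.mul_add_mod]
  rw [e2]
  simp [Polynomial.eval_comp, mul_comm]
end
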